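/- arXiv:1206.0163 — 4 statements merged into one kernel-verified Lean document; each statement's English description precedes it below -/
import Mathlib

section
/- For all real constants a > b > 0 and all parameters λ₁, λ₂ ∈ ℝ \ {a, b} with λ₁ ≠ λ₂, the functions K_{λ₁} and K_{λ₂} are functionally independent: the set of points (x, y, ẋ, ẏ) ∈ ℝ⁴ at which the gradients ∇K_{λ₁} and ∇K_{λ₂} are linearly independent is an open dense subset of ℝ⁴. -/
/-- The function `K_λ` associated with the confocal family with parameters `a > b > 0`. -/
noncomputable def Kfun (a b lam : ℝ) (x y vx vy : ℝ) : ℝ :=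
  vx ^ 2 / (a - lam) + vy ^ 2 / (b - lam) - (vx * y - vy * x) ^ 2 / ((a - lam) * (b - lam))

/-- The gradient of a function of `(x, y, ẋ, ẏ)`: the vector of its four partial
derivatives. -/
noncomputable def gradient4 (f : ℝ → ℝ → ℝ → ℝ → ℝ) (x y vx vy : ℝ) : Fin 4 → ℝ :=
  ![deriv (fun t => f t y vx vy) x,
    deriv (fun t => f x t vx vy) y,
    deriv (fun t => f x y t vy) vx,
    deriv (fun t => f x y vx t) vy]

/-!
Up to the factor `(a - λ)(b - λ)`, the functions `K_λ` form a pencil: `(a - λ)(b - λ) K_λ = F - λ H`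
with `F = b ẋ² + a ẏ² - L²`, `H = ẋ² + ẏ²` and `L = ẋ y - ẏ x`. Two distinct members of the pencil
therefore have independent gradients exactly where `∇F` and `∇H` are independent. The
position components of `∇H` vanish and those of `∇F` are `2 L (ẏ, -ẋ)`, so `L ≠ 0` suffices; and `L`
is a nonzero polynomial, so it is nonzero on a dense set.
-/

open scoped ContDiff Topology

theorem dense_ne_zero_of_analyticOnNhd {𝕜 E F : Type*} [NontriviallyNormedField 𝕜]
    [NormedAddCommGroup E] [NormedSpace 𝕜 E] [PreconnectedSpace E]
    [NormedAddCommGroup F] [NormedSpace 𝕜 F] {f : E → F}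
    (hf : AnalyticOnNhd 𝕜 f Set.univ) (hne : f ≠ 0) : Dense {p | f p ≠ 0} := by
  refine interior_eq_empty_iff_dense_compl.mp (Set.eq_empty_of_forall_notMem fun p hp ↦ hne ?_)
  have hzero : f =ᶠ[𝓝 p] 0 := mem_interior_iff_mem_nhds.mp hp
  exact hf.eq_of_eventuallyEq analyticOnNhd_const hzero

section Gradient

variable {f g : ℝ → ℝ → ℝ → ℝ → ℝ}

theorem gradient4_eq_fderiv {x y vx vy : ℝ} (hf : DifferentiableAt ℝ ↿f (x, y, vx, vy)) :
    gradient4 f x y vx vy =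
      ![fderiv ℝ ↿f (x, y, vx, vy) (1, 0, 0, 0), fderiv ℝ ↿f (x, y, vx, vy) (0, 1, 0, 0),
        fderiv ℝ ↿f (x, y, vx, vy) (0, 0, 1, 0), fderiv ℝ ↿f (x, y, vx, vy) (0, 0, 0, 1)] := by
  have hx : HasDerivAt (fun t ↦ (t, y, vx, vy)) (1, 0, 0, 0) x :=
    (hasDerivAt_id x).prodMk (hasDerivAt_const x (y, vx, vy))
  have hy : HasDerivAt (fun t ↦ (x, t, vx, vy)) (0, 1, 0, 0) y :=
    (hasDerivAt_const y x).prodMk ((hasDerivAt_id y).prodMk (hasDerivAt_const y (vx, vy)))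
  have hvx : HasDerivAt (fun t ↦ (x, y, t, vy)) (0, 0, 1, 0) vx :=
    (hasDerivAt_const vx x).prodMk ((hasDerivAt_const vx y).prodMk
      ((hasDerivAt_id vx).prodMk (hasDerivAt_const vx vy)))
  have hvy : HasDerivAt (fun t ↦ (x, y, vx, t)) (0, 0, 0, 1) vy :=
    (hasDerivAt_const vy x).prodMk ((hasDerivAt_const vy y).prodMk
      ((hasDerivAt_const vy vx).prodMk (hasDerivAt_id vy)))
  have hfx := hf.hasFDerivAt.comp_hasDerivAt x hx
  have hfy := hf.hasFDerivAt.comp_hasDerivAt y hy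
  have hfvx := hf.hasFDerivAt.comp_hasDerivAt vx hvx
  have hfvy := hf.hasFDerivAt.comp_hasDerivAt vy hvy
  rw [← hfx.deriv, ← hfy.deriv, ← hfvx.deriv, ← hfvy.deriv]
  rfl

theorem gradient4_smul_add_smul (c d : ℝ) {x y vx vy : ℝ}
    (hf : DifferentiableAt ℝ ↿f (x, y, vx, vy)) (hg : DifferentiableAt ℝ ↿g (x, y, vx, vy)) :
    gradient4 (c • f + d • g) x y vx vy =
      c • gradient4 f x y vx vy + d • gradient4 g x y vx vy := by
  have hfderiv : HasFDerivAt ↿(c • f + d • g)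
      (c • fderiv ℝ ↿f (x, y, vx, vy) + d • fderiv ℝ ↿g (x, y, vx, vy)) (x, y, vx, vy) :=
    (hf.hasFDerivAt.const_smul c).add (hg.hasFDerivAt.const_smul d)
  rw [gradient4_eq_fderiv hfderiv.differentiableAt, gradient4_eq_fderiv hf,
    gradient4_eq_fderiv hg, hfderiv.fderiv]
  simp

theorem continuous_gradient4 (hf : ContDiff ℝ 1 ↿f) :
    Continuous fun p : ℝ × ℝ × ℝ × ℝ ↦ gradient4 f p.1 p.2.1 p.2.2.1 p.2.2.2 := by
  have hgrad : (fun p : ℝ × ℝ × ℝ × ℝ ↦ gradient4 f p.1 p.2.1 p.2.2.1 p.2.2.2) = fun p ↦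
      ![fderiv ℝ ↿f p (1, 0, 0, 0), fderiv ℝ ↿f p (0, 1, 0, 0),
        fderiv ℝ ↿f p (0, 0, 1, 0), fderiv ℝ ↿f p (0, 0, 0, 1)] :=
    funext fun p ↦ gradient4_eq_fderiv (hf.differentiable one_ne_zero p)
  have hpartial (v : ℝ × ℝ × ℝ × ℝ) : Continuous fun p ↦ fderiv ℝ ↿f p v :=
    (hf.continuous_fderiv one_ne_zero).clm_apply continuous_const
  rw [hgrad]
  refine continuous_pi fun i ↦ ?_
  fin_cases i <;> exact hpartial _

theorem isOpen_setOf_linearIndependent_gradient4 (hf : ContDiff ℝ 1 ↿f) (hg : ContDiff ℝ 1 ↿g) :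
    IsOpen {p : ℝ × ℝ × ℝ × ℝ | LinearIndependent ℝ
      ![gradient4 f p.1 p.2.1 p.2.2.1 p.2.2.2, gradient4 g p.1 p.2.1 p.2.2.1 p.2.2.2]} :=
  isOpen_setOfPred_linearIndependent.preimage
    ((continuous_gradient4 hf).matrixVecCons
      ((continuous_gradient4 hg).matrixVecCons continuous_const))

end Gradient

/-- The angular momentum about the origin, with the sign convention used in `Kfun`. -/
def angularMomentum (x y vx vy : ℝ) : ℝ :=
  vx * y - vy * x

/-- The squared speed `H`, the member at `λ = ∞` of the pencil spanned by the `K_λ`. -/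
def speedSq (_x _y vx vy : ℝ) : ℝ :=
  vx ^ 2 + vy ^ 2

/-- The member `F = a b K₀` at `λ = 0` of the pencil spanned by the `K_λ`, with denominators cleared
so that it also makes sense for `a b = 0`. -/
def pencilZero (a b : ℝ) (x y vx vy : ℝ) : ℝ :=
  b * vx ^ 2 + a * vy ^ 2 - angularMomentum x y vx vy ^ 2

theorem dense_angularMomentum_ne_zero : Dense {p | ↿angularMomentum p ≠ 0} := by
  have hcontDiff : ContDiff ℝ ω ↿angularMomentum := by
    change ContDiff ℝ ω fun p : ℝ × ℝ × ℝ × ℝ ↦ p.2.2.1 * p.2.1 - p.2.2.2 * p.1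
    fun_prop
  have hone : ↿angularMomentum (0, 1, 1, 0) = 1 := by
    change (1 : ℝ) * 1 - 0 * 0 = 1
    norm_num
  refine dense_ne_zero_of_analyticOnNhd hcontDiff.analyticOnNhd fun hzero ↦ ?_
  simp [hzero] at hone

theorem contDiff_speedSq : ContDiff ℝ 1 ↿speedSq := by
  change ContDiff ℝ 1 fun p : ℝ × ℝ × ℝ × ℝ ↦ speedSq p.1 p.2.1 p.2.2.1 p.2.2.2
  unfold speedSq
  fun_prop

theorem contDiff_pencilZero (a b : ℝ) : ContDiff ℝ 1 ↿(pencilZero a b) := by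
  change ContDiff ℝ 1 fun p : ℝ × ℝ × ℝ × ℝ ↦ pencilZero a b p.1 p.2.1 p.2.2.1 p.2.2.2
  unfold pencilZero angularMomentum
  fun_prop

theorem contDiff_Kfun (a b lam : ℝ) : ContDiff ℝ 1 ↿(Kfun a b lam) := by
  change ContDiff ℝ 1 fun p : ℝ × ℝ × ℝ × ℝ ↦ Kfun a b lam p.1 p.2.1 p.2.2.1 p.2.2.2
  unfold Kfun
  fun_prop

theorem gradient4_speedSq (x y vx vy : ℝ) :
    gradient4 speedSq x y vx vy = ![0, 0, 2 * vx, 2 * vy] := by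
  simp [gradient4, speedSq]

theorem gradient4_pencilZero (a b x y vx vy : ℝ) :
    gradient4 (pencilZero a b) x y vx vy =
      ![2 * angularMomentum x y vx vy * vy,
        -2 * angularMomentum x y vx vy * vx,
        2 * b * vx - 2 * angularMomentum x y vx vy * y,
        2 * a * vy + 2 * angularMomentum x y vx vy * x] := by
  have hLx : HasDerivAt (fun t ↦ angularMomentum t y vx vy) (-(vy * 1)) x :=
    ((hasDerivAt_id x).const_mul vy).const_sub (vx * y)
  have hLy : HasDerivAt (fun t ↦ angularMomentum x t vx vy) (vx * 1) y :=
    ((hasDerivAt_id y).const_mul vx).sub_const (vy * x)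
  have hLvx : HasDerivAt (fun t ↦ angularMomentum x y t vy) (1 * y) vx :=
    ((hasDerivAt_id vx).mul_const y).sub_const (vy * x)
  have hLvy : HasDerivAt (fun t ↦ angularMomentum x y vx t) (-(1 * x)) vy :=
    ((hasDerivAt_id vy).mul_const x).const_sub (vx * y)
  have hx : HasDerivAt (fun t ↦ pencilZero a b t y vx vy)
      (2 * angularMomentum x y vx vy * vy) x :=
    ((hLx.pow 2).const_sub (b * vx ^ 2 + a * vy ^ 2)).congr_deriv (by ring)
  have hy : HasDerivAt (fun t ↦ pencilZero a b x t vx vy)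
      (-2 * angularMomentum x y vx vy * vx) y :=
    ((hLy.pow 2).const_sub (b * vx ^ 2 + a * vy ^ 2)).congr_deriv (by ring)
  have hvx : HasDerivAt (fun t ↦ pencilZero a b x y t vy)
      (2 * b * vx - 2 * angularMomentum x y vx vy * y) vx :=
    ((((hasDerivAt_pow 2 vx).const_mul b).add_const (a * vy ^ 2)).sub
      (hLvx.pow 2)).congr_deriv (by ring)
  have hvy : HasDerivAt (fun t ↦ pencilZero a b x y vx t)
      (2 * a * vy + 2 * angularMomentum x y vx vy * x) vy :=
    ((((hasDerivAt_pow 2 vy).const_mul a).const_add (b * vx ^ 2)).sub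
      (hLvy.pow 2)).congr_deriv (by ring)
  rw [gradient4, hx.deriv, hy.deriv, hvx.deriv, hvy.deriv]

theorem linearIndependent_gradient4_pencilZero_speedSq (a b : ℝ) {x y vx vy : ℝ}
    (hL : angularMomentum x y vx vy ≠ 0) :
    LinearIndependent ℝ
      ![gradient4 (pencilZero a b) x y vx vy, gradient4 speedSq x y vx vy] := by
  rw [gradient4_pencilZero, gradient4_speedSq, LinearIndependent.pair_iff]
  intro s t hst
  set L := angularMomentum x y vx vy
  have hL_eq : L = vx * y - vy * x := rfl
  have hx : s * (2 * L * vy) = 0 := by simpa using congrFun hst 0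
  have hy : s * (-2 * L * vx) = 0 := by simpa using congrFun hst 1
  have hs : s = 0 := by
    have : s * L ^ 2 = 0 := by
      linear_combination s * L * hL_eq - x / 2 * hx - y / 2 * hy
    simpa [hL] using this
  subst hs
  have hvx : t * (2 * vx) = 0 := by simpa using congrFun hst 2
  have hvy : t * (2 * vy) = 0 := by simpa using congrFun hst 3
  have ht : t = 0 := by
    have : t * L = 0 := by
      linear_combination t * hL_eq + y / 2 * hvx - x / 2 * hvy
    simpa [hL] using this
  exact ⟨rfl, ht⟩

theorem Kfun_eq_smul_add_smul {a b lam : ℝ} (ha : lam ≠ a) (hb : lam ≠ b) :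
    Kfun a b lam = ((a - lam) * (b - lam))⁻¹ • pencilZero a b +
      (-lam / ((a - lam) * (b - lam))) • speedSq := by
  have ha' : a - lam ≠ 0 := sub_ne_zero.mpr ha.symm
  have hb' : b - lam ≠ 0 := sub_ne_zero.mpr hb.symm
  ext x y vx vy
  simp only [Kfun, pencilZero, speedSq, angularMomentum, Pi.add_apply, Pi.smul_apply, smul_eq_mul]
  field_simp
  ring

theorem gradient4_Kfun {a b lam : ℝ} (ha : lam ≠ a) (hb : lam ≠ b) (x y vx vy : ℝ) :
    gradient4 (Kfun a b lam) x y vx vy =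
      ((a - lam) * (b - lam))⁻¹ • gradient4 (pencilZero a b) x y vx vy +
        (-lam / ((a - lam) * (b - lam))) • gradient4 speedSq x y vx vy := by
  rw [Kfun_eq_smul_add_smul ha hb, gradient4_smul_add_smul]
  · exact (contDiff_pencilZero a b).differentiable one_ne_zero _
  · exact contDiff_speedSq.differentiable one_ne_zero _

theorem linearIndependent_gradient4_Kfun {a b lam1 lam2 x y vx vy : ℝ}
    (h1a : lam1 ≠ a) (h1b : lam1 ≠ b) (h2a : lam2 ≠ a) (h2b : lam2 ≠ b) (hne : lam1 ≠ lam2)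
    (hL : angularMomentum x y vx vy ≠ 0) :
    LinearIndependent ℝ
      ![gradient4 (Kfun a b lam1) x y vx vy, gradient4 (Kfun a b lam2) x y vx vy] := by
  have h1a' : a - lam1 ≠ 0 := sub_ne_zero.mpr h1a.symm
  have h1b' : b - lam1 ≠ 0 := sub_ne_zero.mpr h1b.symm
  have h2a' : a - lam2 ≠ 0 := sub_ne_zero.mpr h2a.symm
  have h2b' : b - lam2 ≠ 0 := sub_ne_zero.mpr h2b.symm
  rw [gradient4_Kfun h1a h1b, gradient4_Kfun h2a h2b,
    LinearIndependent.pair_add_smul_add_smul_iff]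
  refine ⟨linearIndependent_gradient4_pencilZero_speedSq a b hL, fun hdet ↦ hne ?_⟩
  field_simp at hdet
  linarith

theorem functionally_independent_K_general
    (a b lam1 lam2 : ℝ) (h1a : lam1 ≠ a) (h1b : lam1 ≠ b) (h2a : lam2 ≠ a) (h2b : lam2 ≠ b)
    (hne : lam1 ≠ lam2) :
    IsOpen {p : ℝ × ℝ × ℝ × ℝ |
        LinearIndependent ℝ
          ![gradient4 (Kfun a b lam1) p.1 p.2.1 p.2.2.1 p.2.2.2,
            gradient4 (Kfun a b lam2) p.1 p.2.1 p.2.2.1 p.2.2.2]} ∧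
    Dense {p : ℝ × ℝ × ℝ × ℝ |
        LinearIndependent ℝ
          ![gradient4 (Kfun a b lam1) p.1 p.2.1 p.2.2.1 p.2.2.2,
            gradient4 (Kfun a b lam2) p.1 p.2.1 p.2.2.1 p.2.2.2]} := by
  have hindep (p : ℝ × ℝ × ℝ × ℝ) (hp : ↿angularMomentum p ≠ 0) :=
    linearIndependent_gradient4_Kfun h1a h1b h2a h2b hne hp
  exact ⟨isOpen_setOf_linearIndependent_gradient4 (contDiff_Kfun a b lam1) (contDiff_Kfun a b lam2),
    dense_angularMomentum_ne_zero.mono hindep⟩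

theorem functionally_independent_K
    (a b : ℝ) (ha : a > b) (hb : b > 0)
    (lam1 lam2 : ℝ) (h1a : lam1 ≠ a) (h1b : lam1 ≠ b) (h2a : lam2 ≠ a) (h2b : lam2 ≠ b)
    (hne : lam1 ≠ lam2) :
    IsOpen {p : ℝ × ℝ × ℝ × ℝ |
        LinearIndependent ℝ
          ![gradient4 (Kfun a b lam1) p.1 p.2.1 p.2.2.1 p.2.2.2,
            gradient4 (Kfun a b lam2) p.1 p.2.1 p.2.2.1 p.2.2.2]} ∧
    Dense {p : ℝ × ℝ × ℝ × ℝ |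
        LinearIndependent ℝ
          ![gradient4 (Kfun a b lam1) p.1 p.2.1 p.2.2.1 p.2.2.2,
            gradient4 (Kfun a b lam2) p.1 p.2.1 p.2.2.1 p.2.2.2]} :=
  functionally_independent_K_general a b lam1 lam2 h1a h1b h2a h2b hne
end

section
/- Let a > b > 0 and 0 < α₀ < b be real constants and let E = C_{α₀} be the ellipse x²/(a−α₀) + y²/(b−α₀) = 1. Then there exist a homeomorphism h from E onto the circle ℝ/ℤ and a function ρ : (−∞, α₀) → ℝ with the following property: for every λ < α₀ and every triple of points X ∈ E, Y ∈ E, A ∈ C_λ such that the line through X and A is tangent to E at X, the line through A and Y is tangent to E at Y, and the direction Y − A is the billiard reflection of the direction A − X off C_λ at A (i.e. Y − A is a positive scalar multiple of the reflection of A − X across the tangent line of C_λ at A), one has h(Y) − h(X) = ρ(λ) or h(Y) − h(X) = −ρ(λ) in ℝ/ℤ. -/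
/-- The conic `C_λ : x²/(a−λ) + y²/(b−λ) = 1` of the confocal family. -/
def confocalConic (a b lam : ℝ) : Set (ℝ × ℝ) :=
  {p : ℝ × ℝ | p.1 ^ 2 / (a - lam) + p.2 ^ 2 / (b - lam) = 1}

/-- The billiard reflection of a vector `v` off the conic `C_λ` at the point `A ∈ C_λ`:
the component along the normal `n = (A₁/(a−λ), A₂/(b−λ))` is reversed. -/
noncomputable def billiardReflect (a b lam : ℝ) (A v : ℝ × ℝ) : ℝ × ℝ :=
  let n : ℝ × ℝ := (A.1 / (a - lam), A.2 / (b - lam))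
  v - (2 * ((v.1 * n.1 + v.2 * n.2) / (n.1 * n.1 + n.2 * n.2))) • n

/-- The line through the points `P` and `Q` is tangent to the set `E` at the point `X`:
`X` lies on the line and the line meets `E` only at `X`. -/
def TangentAt (E : Set (ℝ × ℝ)) (P Q X : ℝ × ℝ) : Prop :=
  X ∈ E ∧ (∃ t : ℝ, X = P + t • (Q - P)) ∧
    ∀ Z ∈ E, (∃ t : ℝ, Z = P + t • (Q - P)) → Z = X

/-!
A tangent of `E` through `A ∈ C_λ` is never normal to `C_λ`, so the ray from `X` is reflected at `A`
into the other tangent through `A`, and `Y ≠ X`.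

The affine map taking `E` to the unit circle turns the tangents from `A` at the points of eccentric
angles `s - d` and `s + d` into a pair of tangents of the circle, whose pole is
`(cos s / cos d, sin s / cos d)`. Hence `A ∈ C_λ` says `cos² d = F cos² s + G sin² s` with
`F = (a - α₀) / (a - λ)` and `G = (b - α₀) / (b - λ)`, which determines `d` as a function of `s`.
Let `w θ = √((a - α₀) sin² θ + (b - α₀) cos² θ)` be the speed of the parametrization of `E` by the
eccentric angle. Since the conics are confocal, `1 ± d'(s)` is a common multiple of `w (s ± d)`,
that is, the tangency points move by the same amount for the measure `dθ / w θ`. This measure does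
not depend on `λ`, so its normalized primitive is a coordinate on `E` in which all the maps
`X ↦ Y` are rotations.
-/

section CircleLift

/-- The homeomorphism of additive circles induced by a homeomorphism `e` of their covers with
`e (x + p) = e x + q`. -/
def addCircleHomeomorphOfLift {𝕜 𝕜' : Type*} [AddCommGroup 𝕜] [TopologicalSpace 𝕜]
    [AddCommGroup 𝕜'] [TopologicalSpace 𝕜'] {p : 𝕜} {q : 𝕜'} (e : 𝕜 ≃ₜ 𝕜')
    (he : ∀ x, e (x + p) = e x + q) : AddCircle p ≃ₜ AddCircle q where
  toFun := Function.Periodic.lift (f := fun x ↦ (e x : AddCircle q)) fun x ↦ by simp [he]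
  invFun := Function.Periodic.lift (f := fun y ↦ (e.symm y : AddCircle p)) fun y ↦ by
    have : e.symm (y + q) = e.symm y + p := by simp [e.symm_apply_eq, he]
    simp [this]
  left_inv x := by
    induction x using QuotientAddGroup.induction_on with
    | _ x => exact congrArg QuotientAddGroup.mk (e.symm_apply_apply x)
  right_inv y := by
    induction y using QuotientAddGroup.induction_on with
    | _ y => exact congrArg QuotientAddGroup.mk (e.apply_symm_apply y)
  continuous_toFun :=
    continuous_coinduced_dom.2 (continuous_quotient_mk'.comp e.continuous)
  continuous_invFun :=
    continuous_coinduced_dom.2 (continuous_quotient_mk'.comp e.symm.continuous)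

end CircleLift

section NormalizedPrimitive

open intervalIntegral

/-- The primitive of `f` vanishing at `0`, normalized so as to increase by `1` over a period `c`. -/
noncomputable def normalizedPrimitive (f : ℝ → ℝ) (c x : ℝ) : ℝ :=
  (∫ t in (0 : ℝ)..x, f t) / ∫ t in (0 : ℝ)..c, f t

variable {f : ℝ → ℝ} {c : ℝ}

theorem hasDerivAt_normalizedPrimitive (hf : Continuous f) (x : ℝ) :
    HasDerivAt (normalizedPrimitive f c) (f x / ∫ t in (0 : ℝ)..c, f t) x :=
  (hf.integral_hasStrictDerivAt 0 x).hasDerivAt.div_const _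

theorem integral_period_pos (hf : Continuous f) (hpos : ∀ x, 0 < f x) (hc : 0 < c) :
    0 < ∫ t in (0 : ℝ)..c, f t :=
  intervalIntegral_pos_of_pos (hf.intervalIntegrable 0 c) hpos hc

theorem normalizedPrimitive_add_period (hf : Continuous f) (hper : Function.Periodic f c)
    (hint : ∫ t in (0 : ℝ)..c, f t ≠ 0) (x : ℝ) :
    normalizedPrimitive f c (x + c) = normalizedPrimitive f c x + 1 := by
  have hsplit : ∫ t in (0 : ℝ)..(x + c), f t =
      (∫ t in (0 : ℝ)..x, f t) + ∫ t in (0 : ℝ)..c, f t := by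
    rw [← integral_add_adjacent_intervals (hf.intervalIntegrable 0 x) (hf.intervalIntegrable x _),
      hper.intervalIntegral_add_eq x 0, zero_add]
  rw [normalizedPrimitive, normalizedPrimitive, hsplit, add_div, div_self hint]

theorem continuous_normalizedPrimitive (hf : Continuous f) :
    Continuous (normalizedPrimitive f c) :=
  continuous_iff_continuousAt.2 fun x ↦ (hasDerivAt_normalizedPrimitive hf x).continuousAt

theorem strictMono_normalizedPrimitive (hf : Continuous f) (hpos : ∀ x, 0 < f x) (hc : 0 < c) :
    StrictMono (normalizedPrimitive f c) :=
  strictMono_of_deriv_pos fun x ↦ by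
    rw [(hasDerivAt_normalizedPrimitive hf x).deriv]
    exact div_pos (hpos x) (integral_period_pos hf hpos hc)

theorem surjective_normalizedPrimitive (hf : Continuous f) (hper : Function.Periodic f c)
    (hpos : ∀ x, 0 < f x) (hc : 0 < c) : Function.Surjective (normalizedPrimitive f c) :=
  have hint := hf.intervalIntegrable 0 c
  have hL := integral_period_pos hf hpos hc
  (continuous_normalizedPrimitive hf).surjective
    ((hper.tendsto_atTop_intervalIntegral_of_pos' hint hpos hc).atTop_div_const hL)
    ((hper.tendsto_atBot_intervalIntegral_of_pos' hint hpos hc).atBot_div_const hL)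

/-- The coordinate on the circle `ℝ / cℤ`, with values in `ℝ / ℤ`, in which the measure with
continuous positive density `f` becomes uniform. -/
noncomputable def uniformizingHomeomorph (hf : Continuous f) (hper : Function.Periodic f c)
    (hpos : ∀ x, 0 < f x) (hc : 0 < c) : AddCircle c ≃ₜ AddCircle (1 : ℝ) :=
  addCircleHomeomorphOfLift
    ((strictMono_normalizedPrimitive hf hpos hc).orderIsoOfSurjective _
      (surjective_normalizedPrimitive hf hper hpos hc)).toHomeomorph
    (normalizedPrimitive_add_period hf hper (integral_period_pos hf hpos hc).ne')

theorem uniformizingHomeomorph_coe (hf : Continuous f) (hper : Function.Periodic f c)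
    (hpos : ∀ x, 0 < f x) (hc : 0 < c) (x : ℝ) :
    uniformizingHomeomorph hf hper hpos hc x = (normalizedPrimitive f c x : AddCircle (1 : ℝ)) :=
  rfl

end NormalizedPrimitive

section Trigonometric

open Real

variable {P Q F G k : ℝ}

theorem trigCombination_mem_Ioo (hF : F ∈ Set.Ioo 0 1) (hG : G ∈ Set.Ioo 0 1) (s : ℝ) :
    F * cos s ^ 2 + G * sin s ^ 2 ∈ Set.Ioo 0 1 := by
  have h := convex_Ioo (0 : ℝ) 1 hF hG (sq_nonneg (cos s)) (sq_nonneg (sin s))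
    (cos_sq_add_sin_sq s)
  simpa only [smul_eq_mul, mul_comm] using h

/-- The speed of the parametrization `(√P cos θ, √Q sin θ)` of an ellipse. -/
noncomputable def ellipseSpeed (P Q θ : ℝ) : ℝ := √(P * sin θ ^ 2 + Q * cos θ ^ 2)

theorem ellipseSpeed_pos (hP : 0 < P) (hQ : 0 < Q) (θ : ℝ) : 0 < ellipseSpeed P Q θ := by
  have h := convex_Ioi (0 : ℝ) hP hQ (sq_nonneg (sin θ)) (sq_nonneg (cos θ))
    (sin_sq_add_cos_sq θ)
  exact sqrt_pos.2 (by simpa only [smul_eq_mul, mul_comm, Set.mem_Ioi] using h)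

theorem ellipseSpeed_neg (P Q θ : ℝ) : ellipseSpeed P Q (-θ) = ellipseSpeed P Q θ := by
  simp [ellipseSpeed]

theorem continuous_inv_ellipseSpeed (hP : 0 < P) (hQ : 0 < Q) :
    Continuous fun θ ↦ (ellipseSpeed P Q θ)⁻¹ :=
  Continuous.inv₀ (by unfold ellipseSpeed; fun_prop) fun θ ↦ (ellipseSpeed_pos hP hQ θ).ne'

theorem periodic_inv_ellipseSpeed (P Q : ℝ) :
    Function.Periodic (fun θ ↦ (ellipseSpeed P Q θ)⁻¹) (2 * π) := fun θ ↦ by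
  simp [ellipseSpeed]

/-- The normalized primitive of `dθ / w θ`, where `w` is the speed of the ellipse. -/
noncomputable def ellipsePhase (P Q : ℝ) : ℝ → ℝ :=
  normalizedPrimitive (fun θ ↦ (ellipseSpeed P Q θ)⁻¹) (2 * π)

/-- Half the angle between the points of contact of the two tangents to the unit circle from the
point of the conic `F u² + G v² = 1` in the direction `s`. -/
noncomputable def tangentGap (F G s : ℝ) : ℝ := arccos √(F * cos s ^ 2 + G * sin s ^ 2)

theorem tangentGap_neg (F G s : ℝ) : tangentGap F G (-s) = tangentGap F G s := by
  simp [tangentGap]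

theorem periodic_tangentGap (F G : ℝ) : Function.Periodic (tangentGap F G) π := fun s ↦ by
  simp [tangentGap]

theorem cos_tangentGap_sq (hF : F ∈ Set.Ioo 0 1) (hG : G ∈ Set.Ioo 0 1) (s : ℝ) :
    cos (tangentGap F G s) ^ 2 = F * cos s ^ 2 + G * sin s ^ 2 := by
  have ⟨h0, h1⟩ := trigCombination_mem_Ioo hF hG s
  rw [tangentGap, cos_arccos (by linarith [sqrt_nonneg (F * cos s ^ 2 + G * sin s ^ 2)])
    (sqrt_le_one.2 h1.le), sq_sqrt h0.le]

theorem tangentGap_mem_Ioo (hF : F ∈ Set.Ioo 0 1) (hG : G ∈ Set.Ioo 0 1) (s : ℝ) :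
    tangentGap F G s ∈ Set.Ioo 0 (π / 2) := by
  have ⟨h0, h1⟩ := trigCombination_mem_Ioo hF hG s
  exact ⟨arccos_pos.2 ((sqrt_lt' one_pos).2 (by rwa [one_pow])),
    arccos_lt_pi_div_two.2 (sqrt_pos.2 h0)⟩

theorem cos_tangentGap_pos (hF : F ∈ Set.Ioo 0 1) (hG : G ∈ Set.Ioo 0 1) (s : ℝ) :
    0 < cos (tangentGap F G s) :=
  have ⟨h0, h1⟩ := tangentGap_mem_Ioo hF hG s
  cos_pos_of_mem_Ioo ⟨by linarith, h1⟩

theorem sin_tangentGap_pos (hF : F ∈ Set.Ioo 0 1) (hG : G ∈ Set.Ioo 0 1) (s : ℝ) :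
    0 < sin (tangentGap F G s) :=
  have ⟨h0, h1⟩ := tangentGap_mem_Ioo hF hG s
  sin_pos_of_pos_of_lt_pi h0 (by linarith [pi_pos])

theorem sin_tangentGap_sq (hF : F ∈ Set.Ioo 0 1) (hG : G ∈ Set.Ioo 0 1) (s : ℝ) :
    sin (tangentGap F G s) ^ 2 = (1 - F) * cos s ^ 2 + (1 - G) * sin s ^ 2 := by
  rw [sin_sq, cos_tangentGap_sq hF hG]
  linear_combination -cos_sq_add_sin_sq s

theorem hasDerivAt_tangentGap (hF : F ∈ Set.Ioo 0 1) (hG : G ∈ Set.Ioo 0 1) (s : ℝ) :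
    HasDerivAt (tangentGap F G)
      ((F - G) * sin s * cos s / (sin (tangentGap F G s) * cos (tangentGap F G s))) s := by
  have ⟨h0, h1⟩ := trigCombination_mem_Ioo hF hG s
  have hm : HasDerivAt (fun s ↦ F * cos s ^ 2 + G * sin s ^ 2)
      (2 * ((G - F) * sin s * cos s)) s := by
    refine ((((hasDerivAt_cos s).pow 2).const_mul F).add
      (((hasDerivAt_sin s).pow 2).const_mul G)).congr_deriv ?_
    push_cast
    ring
  have hsqrt_nonneg := sqrt_nonneg (F * cos s ^ 2 + G * sin s ^ 2)
  have hsqrt_lt : √(F * cos s ^ 2 + G * sin s ^ 2) < 1 := (sqrt_lt' one_pos).2 (by rwa [one_pow])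
  have hcos : cos (tangentGap F G s) = √(F * cos s ^ 2 + G * sin s ^ 2) :=
    cos_arccos (by linarith) hsqrt_lt.le
  have hsin : sin (tangentGap F G s) = √(1 - √(F * cos s ^ 2 + G * sin s ^ 2) ^ 2) := sin_arccos _
  refine ((hasDerivAt_arccos (by linarith) hsqrt_lt.ne).comp s
    (hm.sqrt h0.ne')).congr_deriv ?_
  rw [← hsin, ← hcos]
  have := (sin_tangentGap_pos hF hG s).ne'
  have := (cos_tangentGap_pos hF hG s).ne'
  field_simp
  ring

theorem abs_lt_sin_mul_cos_tangentGap (hF : F ∈ Set.Ioo 0 1) (hG : G ∈ Set.Ioo 0 1) (s : ℝ) :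
    |(F - G) * sin s * cos s| < sin (tangentGap F G s) * cos (tangentGap F G s) := by
  refine abs_lt_of_sq_lt_sq ?_
    (mul_pos (sin_tangentGap_pos hF hG s) (cos_tangentGap_pos hF hG s)).le
  have hpos := (trigCombination_mem_Ioo
    (F := F * (1 - F)) (G := G * (1 - G)) ⟨by nlinarith [hF.1, hF.2], by nlinarith [hF.1, hF.2]⟩
    ⟨by nlinarith [hG.1, hG.2], by nlinarith [hG.1, hG.2]⟩ s).1
  rw [mul_pow (sin _), cos_tangentGap_sq hF hG, sin_tangentGap_sq hF hG]
  linear_combination hpos - (F * (1 - F) * cos s ^ 2 + G * (1 - G) * sin s ^ 2) *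
    cos_sq_add_sin_sq s

theorem ellipseSpeed_add_tangentGap (hF : F ∈ Set.Ioo 0 1) (hG : G ∈ Set.Ioo 0 1) (hk : 0 ≤ k)
    (hP : P = k * (F * (1 - G))) (hQ : Q = k * (G * (1 - F))) (s : ℝ) :
    ellipseSpeed P Q (s + tangentGap F G s) =
      √k * (sin (tangentGap F G s) * cos (tangentGap F G s) + (F - G) * sin s * cos s) := by
  have hnonneg : 0 ≤ sin (tangentGap F G s) * cos (tangentGap F G s) + (F - G) * sin s * cos s := by
    linarith [(abs_lt.1 (abs_lt_sin_mul_cos_tangentGap hF hG s)).1]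
  have hc := cos_tangentGap_sq hF hG s
  have hs := sin_tangentGap_sq hF hG s
  rw [ellipseSpeed, ← sqrt_sq hnonneg, ← sqrt_mul hk, sin_add, cos_add, hP, hQ]
  congr 1
  linear_combination
    k * (F * (1 - G) * sin s ^ 2 + G * (1 - F) * cos s ^ 2 - sin (tangentGap F G s) ^ 2) * hc +
    k * (F * (1 - G) * cos s ^ 2 + G * (1 - F) * sin s ^ 2 -
      (F * cos s ^ 2 + G * sin s ^ 2)) * hs

theorem ellipseSpeed_sub_tangentGap (hF : F ∈ Set.Ioo 0 1) (hG : G ∈ Set.Ioo 0 1) (hk : 0 ≤ k)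
    (hP : P = k * (F * (1 - G))) (hQ : Q = k * (G * (1 - F))) (s : ℝ) :
    ellipseSpeed P Q (s - tangentGap F G s) =
      √k * (sin (tangentGap F G s) * cos (tangentGap F G s) - (F - G) * sin s * cos s) := by
  have h := ellipseSpeed_add_tangentGap hF hG hk hP hQ (-s)
  rw [tangentGap_neg, ← ellipseSpeed_neg, sin_neg, cos_neg] at h
  convert h using 2 <;> ring

/-- The difference of the phases of the two points of contact seen from the point of the conic
`F u² + G v² = 1` in the direction `0`. -/
noncomputable def phaseAdvance (P Q F G : ℝ) : ℝ :=
  ellipsePhase P Q (tangentGap F G 0) - ellipsePhase P Q (-tangentGap F G 0)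

theorem ellipsePhase_add_sub_tangentGap (hF : F ∈ Set.Ioo 0 1) (hG : G ∈ Set.Ioo 0 1) (hk : 0 < k)
    (hP : P = k * (F * (1 - G))) (hQ : Q = k * (G * (1 - F))) (s : ℝ) :
    ellipsePhase P Q (s + tangentGap F G s) - ellipsePhase P Q (s - tangentGap F G s) =
      phaseAdvance P Q F G := by
  have hPpos : 0 < P := hP ▸ mul_pos hk (mul_pos hF.1 (by linarith [hG.2]))
  have hQpos : 0 < Q := hQ ▸ mul_pos hk (mul_pos hG.1 (by linarith [hF.2]))
  have hphase := hasDerivAt_normalizedPrimitive (c := 2 * π)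
    (continuous_inv_ellipseSpeed hPpos hQpos)
  have hderiv (s : ℝ) : HasDerivAt (fun s ↦ ellipsePhase P Q (s + tangentGap F G s) -
      ellipsePhase P Q (s - tangentGap F G s)) 0 s := by
    have hgap := hasDerivAt_tangentGap hF hG s
    refine (((hphase _).comp s ((hasDerivAt_id s).add hgap)).sub
      ((hphase _).comp s ((hasDerivAt_id s).sub hgap))).congr_deriv ?_
    have ⟨hlo, hhi⟩ := abs_lt.1 (abs_lt_sin_mul_cos_tangentGap hF hG s)
    have := (sin_tangentGap_pos hF hG s).ne'
    have := (cos_tangentGap_pos hF hG s).ne'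
    have := (sqrt_pos.2 hk).ne'
    simp only [id_eq, Pi.add_apply, Pi.sub_apply]
    rw [ellipseSpeed_add_tangentGap hF hG hk.le hP hQ,
      ellipseSpeed_sub_tangentGap hF hG hk.le hP hQ]
    generalize sin (tangentGap F G s) = σ at *
    generalize cos (tangentGap F G s) = κ at *
    generalize (F - G) * sin s * cos s = τ at *
    have : σ * κ + τ ≠ 0 := by linarith
    have : σ * κ - τ ≠ 0 := by linarith
    field_simp
    ring
  simpa only [phaseAdvance, zero_add, zero_sub] using is_const_of_deriv_eq_zero
    (fun s ↦ (hderiv s).differentiableAt) (fun s ↦ (hderiv s).deriv) s 0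

theorem periodic_coe_ellipsePhase (hP : 0 < P) (hQ : 0 < Q) :
    Function.Periodic (fun θ ↦ (ellipsePhase P Q θ : AddCircle (1 : ℝ))) (2 * π) := fun θ ↦ by
  have hint := integral_period_pos (continuous_inv_ellipseSpeed hP hQ)
    (fun θ ↦ inv_pos.2 (ellipseSpeed_pos hP hQ θ)) two_pi_pos
  simp only [ellipsePhase, normalizedPrimitive_add_period (continuous_inv_ellipseSpeed hP hQ)
    (periodic_inv_ellipseSpeed P Q) hint.ne', AddCircle.coe_add_period]

theorem coe_ellipsePhase_sub_eq_or_eq_neg (hF : F ∈ Set.Ioo 0 1) (hG : G ∈ Set.Ioo 0 1)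
    (hk : 0 < k) (hP : P = k * (F * (1 - G))) (hQ : Q = k * (G * (1 - F))) {θ₁ θ₂ : ℝ}
    (h : cos ((θ₂ - θ₁) / 2) ^ 2 =
      F * cos ((θ₁ + θ₂) / 2) ^ 2 + G * sin ((θ₁ + θ₂) / 2) ^ 2) :
    (ellipsePhase P Q θ₂ - ellipsePhase P Q θ₁ : AddCircle (1 : ℝ)) = phaseAdvance P Q F G ∨
      (ellipsePhase P Q θ₂ - ellipsePhase P Q θ₁ : AddCircle (1 : ℝ)) =
        -(phaseAdvance P Q F G : AddCircle (1 : ℝ)) := by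
  have hPpos : 0 < P := hP ▸ mul_pos hk (mul_pos hF.1 (sub_pos.2 hG.2))
  have hQpos : 0 < Q := hQ ▸ mul_pos hk (mul_pos hG.1 (sub_pos.2 hF.2))
  set s := (θ₁ + θ₂) / 2 with hs
  set d := tangentGap F G s with hd
  have hcos : cos (2 * d) = cos (θ₂ - θ₁) := by
    rw [← mul_div_cancel₀ (θ₂ - θ₁) two_ne_zero, cos_two_mul, cos_two_mul,
      cos_tangentGap_sq hF hG, h]
  obtain ⟨n, hn⟩ := cos_eq_cos_iff.1 hcos
  have hadvance := ellipsePhase_add_sub_tangentGap hF hG hk hP hQ (s - n * π)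
  rw [(periodic_tangentGap F G).sub_int_mul_eq n, ← hd] at hadvance
  have hper (θ : ℝ) : (ellipsePhase P Q (θ + n * (2 * π)) : AddCircle (1 : ℝ)) =
      ellipsePhase P Q θ := (periodic_coe_ellipsePhase hPpos hQpos).int_mul n θ
  rcases hn with hn | hn
  · left
    have h₁ : θ₁ = s - n * π - d := by linarith
    have h₂ : θ₂ = s - n * π + d + n * (2 * π) := by linarith
    rw [h₁, h₂, hper, ← AddCircle.coe_sub, hadvance]
  · right
    have h₁ : θ₁ = s - n * π + d := by linarith
    have h₂ : θ₂ = s - n * π - d + n * (2 * π) := by linarith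
    rw [h₁, h₂, hper, ← AddCircle.coe_sub, ← AddCircle.coe_neg, ← hadvance, neg_sub]

theorem mul_cos_eq_and_mul_sin_eq_of_two_tangents {u v θ₁ θ₂ : ℝ}
    (hne : sin ((θ₂ - θ₁) / 2) ≠ 0) (h₁ : cos θ₁ * u + sin θ₁ * v = 1)
    (h₂ : cos θ₂ * u + sin θ₂ * v = 1) :
    u * cos ((θ₂ - θ₁) / 2) = cos ((θ₁ + θ₂) / 2) ∧
      v * cos ((θ₂ - θ₁) / 2) = sin ((θ₁ + θ₂) / 2) := by
  obtain ⟨s, d, rfl, rfl⟩ : ∃ s d, θ₁ = s - d ∧ θ₂ = s + d :=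
    ⟨(θ₁ + θ₂) / 2, (θ₂ - θ₁) / 2, by ring, by ring⟩
  rw [show (s + d - (s - d)) / 2 = d by ring] at hne ⊢
  rw [show (s - d + (s + d)) / 2 = s by ring]
  rw [cos_sub, sin_sub] at h₁
  rw [cos_add, sin_add] at h₂
  have hradial : (cos s * u + sin s * v) * cos d = 1 := by linarith
  have hangular : cos s * v - sin s * u = 0 :=
    (mul_eq_zero.1 (by linarith : sin d * (cos s * v - sin s * u) = 0)).resolve_left hne
  have hs := sin_sq_add_cos_sq s
  constructor
  · linear_combination cos s * hradial - sin s * cos d * hangular - u * cos d * hs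
  · linear_combination sin s * hradial + cos s * cos d * hangular - v * cos d * hs

end Trigonometric

section ConfocalConics

open Real

variable {a b α lam : ℝ} {A X Y : ℝ × ℝ}

/-- The symmetric bilinear form whose quadratic form defines `C_λ`; `confocalPolar a b lam X A = 1`
says that `A` lies on the polar of `X`, which is the tangent at `X` if `X ∈ C_λ`. -/
noncomputable def confocalPolar (a b lam : ℝ) (X A : ℝ × ℝ) : ℝ :=
  X.1 * A.1 / (a - lam) + X.2 * A.2 / (b - lam)

/-- The normal to `C_λ` at `A` off which `billiardReflect` reflects. -/
noncomputable def confocalNormal (a b lam : ℝ) (A : ℝ × ℝ) : ℝ × ℝ :=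
  (A.1 / (a - lam), A.2 / (b - lam))

theorem mem_confocalConic_iff_polar :
    A ∈ confocalConic a b lam ↔ confocalPolar a b lam A A = 1 := by
  simp only [confocalConic, confocalPolar, Set.mem_ofPred_eq, sq]

theorem confocalPolar_add_smul (a b lam t : ℝ) (X V : ℝ × ℝ) :
    confocalPolar a b lam (X + t • V) (X + t • V) = confocalPolar a b lam X X +
      t * (2 * confocalPolar a b lam X V + t * confocalPolar a b lam V V) := by
  simp only [confocalPolar, Prod.fst_add, Prod.snd_add, Prod.smul_fst, Prod.smul_snd, smul_eq_mul]
  ring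

theorem confocalPolar_sub_right (a b lam : ℝ) (X A B : ℝ × ℝ) :
    confocalPolar a b lam X (A - B) = confocalPolar a b lam X A - confocalPolar a b lam X B := by
  simp only [confocalPolar, Prod.fst_sub, Prod.snd_sub]
  ring

theorem confocalPolar_smul_right (a b lam t : ℝ) (X A : ℝ × ℝ) :
    confocalPolar a b lam X (t • A) = t * confocalPolar a b lam X A := by
  simp only [confocalPolar, Prod.smul_fst, Prod.smul_snd, smul_eq_mul]
  ring

theorem confocalPolar_comm (a b lam : ℝ) (X A : ℝ × ℝ) :
    confocalPolar a b lam X A = confocalPolar a b lam A X := by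
  simp only [confocalPolar, mul_comm]

theorem sq_div_add_sq_div_pos {p q : ℝ} (hp : 0 < p) (hq : 0 < q) (hA : A ≠ 0) :
    0 < A.1 ^ 2 / p + A.2 ^ 2 / q := by
  have hne : A.1 ≠ 0 ∨ A.2 ≠ 0 := by
    contrapose! hA
    exact Prod.ext hA.1 hA.2
  rcases hne with hne | hne <;> positivity

theorem confocalPolar_self_pos (ha : lam < a) (hb : lam < b) (hA : A ≠ 0) :
    0 < confocalPolar a b lam A A := by
  simpa only [confocalPolar, sq] using sq_div_add_sq_div_pos (sub_pos.2 ha) (sub_pos.2 hb) hA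

/-- The partial fraction `(α - λ) / ((a - α) (a - λ)) = 1 / (a - α) - 1 / (a - λ)`. -/
theorem sub_mul_confocalPolar_normal (haα : a ≠ α) (hbα : b ≠ α) (ha : a ≠ lam) (hb : b ≠ lam)
    (X A : ℝ × ℝ) :
    (α - lam) * confocalPolar a b α X (confocalNormal a b lam A) =
      confocalPolar a b α X A - confocalPolar a b lam X A := by
  have := sub_ne_zero.2 haα
  have := sub_ne_zero.2 hbα
  have := sub_ne_zero.2 ha
  have := sub_ne_zero.2 hb
  simp only [confocalPolar, confocalNormal]
  field_simp
  ring

theorem ne_zero_of_mem_confocalConic (hA : A ∈ confocalConic a b lam) : A ≠ 0 := by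
  rintro rfl
  simp [confocalConic] at hA

theorem disjoint_confocalConic (ha : α < a) (hb : α < b) (hlam : lam < α) :
    Disjoint (confocalConic a b lam) (confocalConic a b α) := by
  refine Set.disjoint_left.2 fun A hA hA' ↦ ?_
  have ha' := hlam.trans ha
  have hb' := hlam.trans hb
  have hpolar := sub_mul_confocalPolar_normal ha.ne' hb.ne' ha'.ne' hb'.ne' A A
  rw [mem_confocalConic_iff_polar.1 hA, mem_confocalConic_iff_polar.1 hA', sub_self] at hpolar
  have hpos := sq_div_add_sq_div_pos (mul_pos (sub_pos.2 ha') (sub_pos.2 ha))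
    (mul_pos (sub_pos.2 hb') (sub_pos.2 hb)) (ne_zero_of_mem_confocalConic hA)
  refine (mul_pos (sub_pos.2 hlam) hpos).ne' ?_
  simpa only [confocalPolar, confocalNormal, mul_div_assoc', div_div, sq] using hpolar

theorem TangentAt.symm {E : Set (ℝ × ℝ)} {P Q X : ℝ × ℝ} (h : TangentAt E P Q X) :
    TangentAt E Q P X := by
  have hline (Z : ℝ × ℝ) : (∃ t : ℝ, Z = Q + t • (P - Q)) ↔ ∃ t : ℝ, Z = P + t • (Q - P) := by
    constructor <;> rintro ⟨t, rfl⟩ <;> exact ⟨1 - t, by module⟩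
  simpa only [TangentAt, hline] using h

theorem TangentAt.confocalPolar_eq_one (ha : lam < a) (hb : lam < b) (hne : A ≠ X)
    (h : TangentAt (confocalConic a b lam) X A X) : confocalPolar a b lam X A = 1 := by
  obtain ⟨hX, -, hunique⟩ := h
  rw [mem_confocalConic_iff_polar] at hX
  have hpos := confocalPolar_self_pos ha hb (sub_ne_zero.2 hne)
  set V := A - X with hV
  set t := -2 * confocalPolar a b lam X V / confocalPolar a b lam V V
  have htV : t * confocalPolar a b lam V V = -2 * confocalPolar a b lam X V :=
    div_mul_cancel₀ _ hpos.ne'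
  have hmem : X + t • V ∈ confocalConic a b lam := by
    rw [mem_confocalConic_iff_polar, confocalPolar_add_smul, hX, htV]
    ring
  have ht0 : t = 0 := by
    have htV0 : t • V = 0 := add_eq_left.1 (hunique _ hmem ⟨t, rfl⟩)
    exact (smul_eq_zero.1 htV0).resolve_right (sub_ne_zero.2 hne)
  have hXV : confocalPolar a b lam X V = 0 := by
    rw [ht0] at htV
    linarith
  rw [hV, confocalPolar_sub_right, hX] at hXV
  linarith

theorem exists_sub_eq_smul_confocalNormal {c : ℝ} (hc : 0 < c)
    (h : X - A = c • billiardReflect a b lam A (A - X)) :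
    ∃ t : ℝ, A - X = t • confocalNormal a b lam A := by
  set r := 2 * (((A - X).1 * (confocalNormal a b lam A).1 +
    (A - X).2 * (confocalNormal a b lam A).2) /
    ((confocalNormal a b lam A).1 * (confocalNormal a b lam A).1 +
      (confocalNormal a b lam A).2 * (confocalNormal a b lam A).2))
  replace h : X - A = c • ((A - X) - r • confocalNormal a b lam A) := h
  have hc' : 1 + c ≠ 0 := by positivity
  refine ⟨(1 + c)⁻¹ * (c * r), ?_⟩
  rw [mul_smul, eq_inv_smul_iff₀ hc']
  linear_combination (norm := module) (-1 : ℝ) • h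

theorem TangentAt.sub_ne_smul_confocalNormal (ha : α < a) (hb : α < b) (hlam : lam < α)
    (hA : A ∈ confocalConic a b lam) (hXA : TangentAt (confocalConic a b α) X A X) (t : ℝ) :
    A - X ≠ t • confocalNormal a b lam A := by
  intro ht
  have ha' := (hlam.trans ha).ne'
  have hb' := (hlam.trans hb).ne'
  have hne := (disjoint_confocalConic ha hb hlam).ne_of_mem hA hXA.1
  have hX := mem_confocalConic_iff_polar.1 hXA.1
  have hpolar := hXA.confocalPolar_eq_one ha hb hne
  have hzero {μ : ℝ} {Z : ℝ × ℝ} (hZ : confocalPolar a b μ Z A = confocalPolar a b μ Z X) :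
      confocalPolar a b μ Z (confocalNormal a b lam A) = 0 := by
    have ht0 : t ≠ 0 := by
      rintro rfl
      exact hne (sub_eq_zero.1 (ht.trans (zero_smul ℝ _)))
    rw [← sub_eq_zero, ← confocalPolar_sub_right, ht, confocalPolar_smul_right] at hZ
    exact (mul_eq_zero.1 hZ).resolve_left ht0
  have hpolar' : confocalPolar a b lam X A = 1 := by
    have := sub_mul_confocalPolar_normal ha.ne' hb.ne' ha' hb' X A
    rw [hzero (hpolar.trans hX.symm), hpolar, mul_zero] at this
    linarith
  have hnormal : confocalPolar a b lam A (confocalNormal a b lam A) = 0 :=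
    hzero (by rw [mem_confocalConic_iff_polar.1 hA, confocalPolar_comm, hpolar'])
  refine (sq_div_add_sq_div_pos (sq_pos_of_ne_zero (sub_ne_zero.2 ha'))
    (sq_pos_of_ne_zero (sub_ne_zero.2 hb')) (ne_zero_of_mem_confocalConic hA)).ne' ?_
  simpa only [confocalPolar, confocalNormal, mul_div_assoc', div_div, sq] using hnormal

theorem ne_of_billiardReflect (ha : α < a) (hb : α < b) (hlam : lam < α)
    (hA : A ∈ confocalConic a b lam) (hXA : TangentAt (confocalConic a b α) X A X)
    (hreflect : ∃ c : ℝ, 0 < c ∧ Y - A = c • billiardReflect a b lam A (A - X)) : X ≠ Y := by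
  rintro rfl
  obtain ⟨c, hc, h⟩ := hreflect
  obtain ⟨t, ht⟩ := exists_sub_eq_smul_confocalNormal hc h
  exact hXA.sub_ne_smul_confocalNormal ha hb hlam hA t ht

/-- The homeomorphism that rescales the axes of the ellipse `C_λ`; the eccentric angle of `X` is the
argument of its image. -/
noncomputable def confocalConicHomeomorphCircle (ha : lam < a) (hb : lam < b) :
    confocalConic a b lam ≃ₜ Circle :=
  have ha' := sub_pos.2 ha
  have hb' := sub_pos.2 hb
  (((Homeomorph.mulLeft₀ _ (inv_ne_zero (sqrt_pos.2 ha').ne')).prodCongr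
    (Homeomorph.mulLeft₀ _ (inv_ne_zero (sqrt_pos.2 hb').ne'))).trans
      Complex.equivRealProdCLM.symm.toHomeomorph).subtype fun X ↦ by
    rw [← SetLike.mem_coe, Submonoid.coe_unitSphere, mem_sphere_zero_iff_norm,
      Complex.norm_def, sqrt_eq_one]
    simp [confocalConic, Complex.normSq_apply, ← sq, mul_pow, inv_pow, sq_sqrt ha'.le,
      sq_sqrt hb'.le, div_eq_inv_mul]

theorem coe_confocalConicHomeomorphCircle (ha : lam < a) (hb : lam < b)
    (X : confocalConic a b lam) : (confocalConicHomeomorphCircle ha hb X : ℂ) =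
      ⟨(√(a - lam))⁻¹ * (X : ℝ × ℝ).1, (√(b - lam))⁻¹ * (X : ℝ × ℝ).2⟩ := rfl

/-- The coordinate on the ellipse `C_λ` whose value at the point of eccentric angle `θ` is the
class of `ellipsePhase (a - lam) (b - lam) θ`. -/
noncomputable def confocalConicPhase (ha : lam < a) (hb : lam < b) :
    confocalConic a b lam ≃ₜ AddCircle (1 : ℝ) :=
  ((confocalConicHomeomorphCircle ha hb).trans AddCircle.homeomorphCircle'.symm).trans
    (uniformizingHomeomorph (continuous_inv_ellipseSpeed (sub_pos.2 ha) (sub_pos.2 hb))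
      (periodic_inv_ellipseSpeed _ _)
      (fun θ ↦ inv_pos.2 (ellipseSpeed_pos (sub_pos.2 ha) (sub_pos.2 hb) θ)) two_pi_pos)

theorem exists_confocalConicPhase_eq (ha : lam < a) (hb : lam < b) (X : confocalConic a b lam) :
    ∃ θ : ℝ, (X : ℝ × ℝ) = (√(a - lam) * cos θ, √(b - lam) * sin θ) ∧
      confocalConicPhase ha hb X = ellipsePhase (a - lam) (b - lam) θ := by
  have ha' := (sqrt_pos.2 (sub_pos.2 ha)).ne'
  have hb' := (sqrt_pos.2 (sub_pos.2 hb)).ne'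
  obtain ⟨θ, hθ⟩ := Circle.exp_surjective (confocalConicHomeomorphCircle ha hb X)
  have hcoe : (Circle.exp θ : ℂ) = _ :=
    (congrArg _ hθ).trans (coe_confocalConicHomeomorphCircle ha hb X)
  rw [Circle.coe_exp, Complex.ext_iff, Complex.exp_ofReal_mul_I_re,
    Complex.exp_ofReal_mul_I_im] at hcoe
  refine ⟨θ, Prod.ext ?_ ?_, ?_⟩
  · rw [hcoe.1, mul_inv_cancel_left₀ ha']
  · rw [hcoe.2, mul_inv_cancel_left₀ hb']
  · have hangle : AddCircle.homeomorphCircle'.symm (Circle.exp θ) = θ :=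
      AddCircle.homeomorphCircle'.symm_apply_eq.2 rfl
    rw [confocalConicPhase, Homeomorph.trans_apply, Homeomorph.trans_apply, ← hθ, hangle]
    exact uniformizingHomeomorph_coe ..

theorem sub_div_sub_mem_Ioo (ha : α < a) (hlam : lam < α) :
    (a - α) / (a - lam) ∈ Set.Ioo 0 1 :=
  ⟨div_pos (sub_pos.2 ha) (sub_pos.2 (hlam.trans ha)),
    (div_lt_one (sub_pos.2 (hlam.trans ha))).2 (by linarith)⟩

theorem sin_half_sub_ne_zero {p q θ₁ θ₂ : ℝ}
    (hne : (p * cos θ₁, q * sin θ₁) ≠ (p * cos θ₂, q * sin θ₂)) :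
    sin ((θ₂ - θ₁) / 2) ≠ 0 := by
  contrapose! hne
  obtain ⟨n, hn⟩ := sin_eq_zero_iff.1 hne
  obtain rfl : θ₂ = θ₁ + n * (2 * π) := by linarith
  rw [cos_add_int_mul_two_pi, sin_add_int_mul_two_pi]

theorem confocalPolar_sqrt_mul_cos_sqrt_mul_sin (a b lam θ : ℝ) (A : ℝ × ℝ) :
    confocalPolar a b lam (√(a - lam) * cos θ, √(b - lam) * sin θ) A =
      cos θ * (A.1 / √(a - lam)) + sin θ * (A.2 / √(b - lam)) := by
  have ha : √(a - lam) / (a - lam) = 1 / √(a - lam) := sqrt_div_self'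
  have hb : √(b - lam) / (b - lam) = 1 / √(b - lam) := sqrt_div_self'
  rw [confocalPolar]
  linear_combination cos θ * A.1 * ha + sin θ * A.2 * hb

theorem cos_sq_half_sub_eq_of_confocalPolar_eq_one (ha : α < a) (hb : α < b) {θ₁ θ₂ : ℝ}
    (hX : X = (√(a - α) * cos θ₁, √(b - α) * sin θ₁))
    (hY : Y = (√(a - α) * cos θ₂, √(b - α) * sin θ₂)) (hXY : X ≠ Y)
    (hA : A ∈ confocalConic a b lam) (hXA : confocalPolar a b α X A = 1)
    (hYA : confocalPolar a b α Y A = 1) :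
    cos ((θ₂ - θ₁) / 2) ^ 2 =
      (a - α) / (a - lam) * cos ((θ₁ + θ₂) / 2) ^ 2 +
        (b - α) / (b - lam) * sin ((θ₁ + θ₂) / 2) ^ 2 := by
  have ha' := sub_pos.2 ha
  have hb' := sub_pos.2 hb
  rw [hX, confocalPolar_sqrt_mul_cos_sqrt_mul_sin] at hXA
  rw [hY, confocalPolar_sqrt_mul_cos_sqrt_mul_sin] at hYA
  obtain ⟨hcos, hsin⟩ := mul_cos_eq_and_mul_sin_eq_of_two_tangents
    (sin_half_sub_ne_zero (hX ▸ hY ▸ hXY)) hXA hYA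
  calc cos ((θ₂ - θ₁) / 2) ^ 2
      = (A.1 ^ 2 / (a - lam) + A.2 ^ 2 / (b - lam)) * cos ((θ₂ - θ₁) / 2) ^ 2 := by
        rw [show _ = (1 : ℝ) from hA, one_mul]
    _ = _ := by
        rw [← hcos, ← hsin, mul_pow, mul_pow, div_pow, div_pow, sq_sqrt ha'.le,
          sq_sqrt hb'.le]
        field_simp

theorem exists_rotation_function_general (ha : α < a) (hb : α < b) :
    ∃ (h : ↥(confocalConic a b α) ≃ₜ AddCircle (1 : ℝ)) (ρ : ℝ → ℝ),
      ∀ lam : ℝ, lam < α →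
        ∀ (X Y : ↥(confocalConic a b α)) (A : ℝ × ℝ),
          A ∈ confocalConic a b lam →
          TangentAt (confocalConic a b α) (X : ℝ × ℝ) A (X : ℝ × ℝ) →
          TangentAt (confocalConic a b α) A (Y : ℝ × ℝ) (Y : ℝ × ℝ) →
          X ≠ Y →
          (h Y - h X = ((ρ lam : ℝ) : AddCircle (1 : ℝ)) ∨
            h Y - h X = -((ρ lam : ℝ) : AddCircle (1 : ℝ))) := by
  refine ⟨confocalConicPhase ha hb, fun lam ↦ phaseAdvance (a - α) (b - α)
    ((a - α) / (a - lam)) ((b - α) / (b - lam)), fun lam hlam X Y A hA hXA hAY hXY ↦ ?_⟩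
  have hdisj (Z : confocalConic a b α) : A ≠ Z :=
    (disjoint_confocalConic ha hb hlam).ne_of_mem hA Z.2
  obtain ⟨θ₁, hX, hphaseX⟩ := exists_confocalConicPhase_eq ha hb X
  obtain ⟨θ₂, hY, hphaseY⟩ := exists_confocalConicPhase_eq ha hb Y
  have hcos := cos_sq_half_sub_eq_of_confocalPolar_eq_one ha hb hX hY
    (Subtype.coe_ne_coe.2 hXY) hA (hXA.confocalPolar_eq_one ha hb (hdisj X))
    (hAY.symm.confocalPolar_eq_one ha hb (hdisj Y))
  have ha' := sub_pos.2 (hlam.trans ha)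
  have hb' := sub_pos.2 (hlam.trans hb)
  have hα := sub_pos.2 hlam
  have hk : 0 < (a - lam) * (b - lam) / (α - lam) := by positivity
  rw [hphaseX, hphaseY]
  exact coe_ellipsePhase_sub_eq_or_eq_neg (sub_div_sub_mem_Ioo ha hlam)
    (sub_div_sub_mem_Ioo hb hlam) hk (by field_simp; ring) (by field_simp; ring) hcos

end ConfocalConics

theorem exists_rotation_function
    (a b alpha0 : ℝ) (hab : a > b) (hb : b > 0) (h0 : 0 < alpha0) (hα : alpha0 < b) :
    ∃ (h : ↥(confocalConic a b alpha0) ≃ₜ AddCircle (1 : ℝ)) (ρ : ℝ → ℝ),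
      ∀ lam : ℝ, lam < alpha0 →
        ∀ (X Y : ↥(confocalConic a b alpha0)) (A : ℝ × ℝ),
          A ∈ confocalConic a b lam →
          TangentAt (confocalConic a b alpha0) (X : ℝ × ℝ) A (X : ℝ × ℝ) →
          TangentAt (confocalConic a b alpha0) A (Y : ℝ × ℝ) (Y : ℝ × ℝ) →
          (∃ c : ℝ, 0 < c ∧
            (Y : ℝ × ℝ) - A = c • billiardReflect a b lam A (A - (X : ℝ × ℝ))) →
          (h Y - h X = ((ρ lam : ℝ) : AddCircle (1 : ℝ)) ∨
            h Y - h X = -((ρ lam : ℝ) : AddCircle (1 : ℝ))) := by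
  have ha := hα.trans hab
  obtain ⟨h, ρ, hρ⟩ := exists_rotation_function_general ha hα
  exact ⟨h, ρ, fun lam hlam X Y A hA hXA hAY hreflect ↦ hρ lam hlam X Y A hA hXA hAY <|
    Subtype.coe_ne_coe.1 <| ne_of_billiardReflect ha hα hlam hA hXA hreflect⟩
end

section
/- Let f be an irreducible billiard-like interval exchange transformation of I = [−1, 1) satisfying the modified Keane condition. Then f is minimal: for every x ∈ I, the forward orbit {f^n(x) : n ≥ 0} is dense in I. -/
/-- An interval exchange transformation of `I = [−1, 1)`: a bijection `f` of `I` together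
with a finite partition of `I` into `d ≥ 2` intervals, closed on the left and open on the
right, with left endpoints `p 0 = −1 < p 1 < … < p (d−1) < 1`, such that the restriction
of `f` to each interval of the partition is a translation. -/
structure IntervalExchange where
  d : ℕ
  two_le : 2 ≤ d
  p : Fin d → ℝ
  mono : StrictMono p
  first : ∀ h : 0 < d, p ⟨0, h⟩ = -1
  lt_one : ∀ i, p i < 1
  f : ℝ → ℝ
  bij : Set.BijOn f (Set.Ico (-1) 1) (Set.Ico (-1) 1)
  translate : ∀ i : Fin d, ∃ t : ℝ,
    ∀ x ∈ Set.Ico (p i) (if h : (i : ℕ) + 1 < d then p ⟨(i : ℕ) + 1, h⟩ else 1),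
      f x = x + t

namespace IntervalExchange

/-- The `i`-th interval of the partition. -/
def piece (T : IntervalExchange) (i : Fin T.d) : Set ℝ :=
  Set.Ico (T.p i) (if h : (i : ℕ) + 1 < T.d then T.p ⟨(i : ℕ) + 1, h⟩ else 1)

/-- A billiard-like interval exchange transformation: `0` is one of the left endpoints,
each interval of the partition is contained either in `[−1, 0)` or in `[0, 1)`, each image
of an interval of the partition is contained either in `[−1, 0)` or in `[0, 1)`, and both
`[−1, 0)` and `[0, 1)` contain at least two intervals of the partition. -/
def BilliardLike (T : IntervalExchange) : Prop :=
  (∃ i, T.p i = 0) ∧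
  (∀ i, T.piece i ⊆ Set.Ico (-1) 0 ∨ T.piece i ⊆ Set.Ico 0 1) ∧
  (∀ i, T.f '' T.piece i ⊆ Set.Ico (-1) 0 ∨ T.f '' T.piece i ⊆ Set.Ico 0 1) ∧
  (∃ i j : Fin T.d, i ≠ j ∧ T.piece i ⊆ Set.Ico (-1) 0 ∧ T.piece j ⊆ Set.Ico (-1) 0) ∧
  (∃ i j : Fin T.d, i ≠ j ∧ T.piece i ⊆ Set.Ico 0 1 ∧ T.piece j ⊆ Set.Ico 0 1)

/-- The modified Keane condition: no iterate of a left endpoint of the partition hits a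
left endpoint other than `−1` and `0`. -/
def ModifiedKeane (T : IntervalExchange) : Prop :=
  ∀ m : ℕ, 1 ≤ m → ∀ i j : Fin T.d, T.p j ≠ -1 → T.p j ≠ 0 →
    T.f^[m] (T.p i) ≠ T.p j

end IntervalExchange

/-- Irreducibility: for no `k < d` is the union of the first `k` intervals of the
partition invariant under the transformation. -/
def IntervalExchange.Irreducible (T : IntervalExchange) : Prop :=
  ∀ k : ℕ, 0 < k → k < T.d →
    T.f '' (⋃ i : Fin T.d, ⋃ (_ : (i : ℕ) < k), T.piece i) ≠
      ⋃ i : Fin T.d, ⋃ (_ : (i : ℕ) < k), T.piece i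

/-!
Call `c` a left end of `F` if `F` starts at `c`. Let `g` be a piecewise translation of a bounded
set with finitely many break points that maps the non-break points of `F` into `F`. Then an
injective orbit of `g` cannot consist of left ends of `F`. Indeed a break point lies in the run of
`F` to the right of at most one orbit point, so from some time on `g` carries runs of a fixed length
`δ` rigidly along the orbit; but two orbit points come within `δ` of each other, and then the right
one lies inside the run of the left one.

Under the modified Keane condition, a break point other than `-1` and `0` has an infinite backward
orbit free of break points, so it is not a left end of any invariant set. Hence a left end other
than `-1` and `0` never meets a break point in the future, and its forward orbit consists of left
ends, so that it must be periodic.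

By irreducibility, an invariant set open to the right such that neither it nor its complement has
left ends other than `-1` and `0` is empty or fills `[-1, 1)` up to `-1` and `0`. Applied to the
points of period `q`, this excludes periodic points, because break points other than `-1` and `0`
are not periodic. Applied to the points that the orbit of `x` does not accumulate from the right, it
shows that there are none: otherwise no orbit point would be accumulated from the right, and the
whole orbit would consist of left ends of its own complement.
-/

open Set Filter Topology

/-- `c` is a left end of `F` if `F` contains a right neighbourhood of `c` but no interval
`(a, c]`. Membership of `c` itself is left open, so that the notion is insensitive to the value of
`F` at a single isolated boundary point. -/
def IsLeftEnd (F : Set ℝ) (c : ℝ) : Prop :=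
  (∀ᶠ z in 𝓝[>] c, z ∈ F) ∧ ∃ᶠ z in 𝓝[≤] c, z ∉ F

namespace IsLeftEnd

variable {F G : Set ℝ} {a b c t : ℝ}

lemma of_notMem (h : ∀ᶠ z in 𝓝[>] c, z ∈ F) (hc : c ∉ F) : IsLeftEnd F c :=
  ⟨h, ((frequently_pure (p := (· ∉ F))).2 hc).filter_mono (pure_le_nhdsWithin self_mem_Iic)⟩

lemma not_Ioc_subset (h : IsLeftEnd F c) (hac : a < c) : ¬ Ioc a c ⊆ F := fun hF ↦
  h.2 <| mem_of_superset (Ioc_mem_nhdsLE hac) fun _ hz ↦ not_not.2 (hF hz)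

lemma not_eventually_mem_iff (h : IsLeftEnd F c) : ¬ ∀ᶠ z in 𝓝 c, (z ∈ F ↔ c ∈ F) := by
  intro hF
  obtain ⟨z, hzF, hz⟩ := (h.1.and (hF.filter_mono nhdsWithin_le_nhds)).exists
  obtain ⟨w, hwF, hw⟩ := (h.2.and_eventually (hF.filter_mono nhdsWithin_le_nhds)).exists
  exact hwF (hw.2 (hz.1 hzF))

lemma congr (hFG : ∀ᶠ z in 𝓝 c, (z ∈ G ↔ z ∈ F)) : IsLeftEnd G c ↔ IsLeftEnd F c :=
  and_congr (eventually_congr (hFG.filter_mono nhdsWithin_le_nhds))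
    (frequently_congr ((hFG.filter_mono nhdsWithin_le_nhds).mono fun _ h ↦ not_congr h))

lemma inter_Ico (h : IsLeftEnd F c) (hc : c ∈ Ico a b) : IsLeftEnd (F ∩ Ico a b) c := by
  refine ⟨?_, h.2.mono fun z hz ↦ mt And.left hz⟩
  filter_upwards [h.1, Ioo_mem_nhdsGT hc.2] with z hzF hz
  exact ⟨hzF, hc.1.trans hz.1.le, hz.2⟩

lemma preimage_add_right_iff : IsLeftEnd ((· + t) ⁻¹' F) c ↔ IsLeftEnd F (c + t) := by
  have map_le : map (· + t) (𝓝[≤] c) = 𝓝[≤] (c + t) := by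
    simpa using (Homeomorph.addRight t).isEmbedding.map_nhdsWithin_eq (Iic c) c
  rw [IsLeftEnd, IsLeftEnd, ← map_add_right_nhdsGT, ← map_le]
  rfl

end IsLeftEnd

section

variable {F : Set ℝ} {a b l r : ℝ}

lemma eventually_eventually_nhdsGT {α : Type*} [TopologicalSpace α] [Preorder α] {a : α}
    {P : α → Prop} (h : ∀ᶠ z in 𝓝[>] a, P z) :
    ∀ᶠ w in 𝓝[>] a, ∀ᶠ z in 𝓝[>] w, P z := by
  filter_upwards [eventually_eventually_nhdsWithin.2 h, self_mem_nhdsWithin] with w hw haw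
  exact hw.filter_mono (nhdsWithin_mono w (Ioi_subset_Ioi haw.le))

lemma exists_isLeftEnd (hab : a ≤ b) (ha : a ∉ F) (hb : ∀ᶠ z in 𝓝[>] b, z ∈ F) :
    ∃ c ∈ Icc a b, IsLeftEnd F c := by
  have ha' : a ∈ Icc a b \ F := ⟨⟨le_rfl, hab⟩, ha⟩
  have hlub : IsLUB (Icc a b \ F) (sSup (Icc a b \ F)) :=
    isLUB_csSup ⟨a, ha'⟩ ⟨b, fun z hz ↦ hz.1.2⟩
  set c := sSup (Icc a b \ F)
  have hcb : c ≤ b := hlub.2 fun z hz ↦ hz.1.2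
  have mem_of_lt : ∀ z ∈ Ioc c b, z ∈ F := fun z hz ↦ by
    by_contra hzF
    exact (hlub.1 ⟨⟨(hlub.1 ha').trans hz.1.le, hz.2⟩, hzF⟩).not_gt hz.1
  refine ⟨c, ⟨hlub.1 ha', hcb⟩, ?_, (hlub.frequently_mem ⟨a, ha'⟩).mono fun z hz ↦ hz.2⟩
  rcases hcb.eq_or_lt with hcb | hcb
  · rwa [hcb]
  · filter_upwards [Ioc_mem_nhdsGT hcb] using mem_of_lt

lemma Ioo_subset_or_Ioo_subset_compl (hF : ∀ z ∈ Ioo l r, z ∈ F → ∀ᶠ w in 𝓝[>] z, w ∈ F)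
    (hl : ∀ c ∈ Ioo l r, ¬ IsLeftEnd F c) (hl' : ∀ c ∈ Ioo l r, ¬ IsLeftEnd Fᶜ c) :
    Ioo l r ⊆ F ∨ Ioo l r ⊆ Fᶜ := by
  have notMem_of_le : ∀ a ∈ Ioo l r, ∀ b ∈ Ioo l r, a ≤ b → a ∉ F → b ∉ F := by
    intro a ha b hb hab haF hbF
    obtain ⟨c, hc, hcF⟩ := exists_isLeftEnd hab haF (hF b hb hbF)
    exact hl c ⟨ha.1.trans_le hc.1, hc.2.trans_lt hb.2⟩ hcF
  by_contra! h
  simp only [not_subset] at h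
  obtain ⟨⟨v, hv, hvF⟩, ⟨u, hu, huF⟩⟩ := h
  have huF : u ∈ F := not_not.1 huF
  have huv : u ≤ v := le_of_not_ge fun hvu ↦ notMem_of_le v hv u hu hvu hvF huF
  have hv_right : ∀ᶠ z in 𝓝[>] v, z ∈ Fᶜ := by
    filter_upwards [Ioo_mem_nhdsGT hv.2] with z hz
    exact notMem_of_le v hv z ⟨hv.1.trans hz.1, hz.2⟩ hz.1.le hvF
  obtain ⟨c, hc, hcF⟩ := exists_isLeftEnd huv (not_not.2 huF) hv_right
  exact hl' c ⟨hu.1.trans_le hc.1, hc.2.trans_lt hv.2⟩ hcF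

lemma eventually_not_Ioc_subset_of_isLeftEnd {D : Set ℝ} {e : ℕ → ℝ} (hD : D.Finite)
    (he : Function.Injective e) (h : ∀ n, IsLeftEnd F (e n)) :
    ∀ᶠ n in atTop, ∀ w ∈ D, e n < w → ¬ Ioc (e n) w ⊆ F := by
  refine (eventually_all_finite hD).2 fun w _ ↦ ?_
  have hsub : {n | e n < w ∧ Ioc (e n) w ⊆ F}.Subsingleton := by
    rintro n ⟨hn, hnF⟩ m ⟨hm, hmF⟩
    rcases lt_trichotomy (e n) (e m) with hlt | heq | hlt
    · exact ((h m).not_Ioc_subset hlt ((Ioc_subset_Ioc_right hm.le).trans hnF)).elim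
    · exact he heq
    · exact ((h n).not_Ioc_subset hlt ((Ioc_subset_Ioc_right hn.le).trans hmF)).elim
  filter_upwards [Nat.cofinite_eq_atTop ▸ hsub.finite.compl_mem_cofinite] with n hn hnw hnF
  exact hn ⟨hnw, hnF⟩

lemma exists_lt_dist_lt {α : Type*} [PseudoMetricSpace α] [ProperSpace α] {s : Set α}
    (hs : Bornology.IsBounded s) {e : ℕ → α} (he : ∀ n, e n ∈ s) {δ : ℝ} (hδ : 0 < δ) :
    ∃ k l, k < l ∧ dist (e k) (e l) < δ := by
  obtain ⟨a, -, φ, hφ, hlim⟩ := tendsto_subseq_of_bounded hs he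
  obtain ⟨N, hN⟩ := Metric.cauchySeq_iff'.1 hlim.cauchySeq δ hδ
  exact ⟨φ N, φ (N + 1), hφ N.lt_succ_self, dist_comm (e _) (e _) ▸ hN (N + 1) N.le_succ⟩

end

/-- `g` is a piecewise translation of `s ⊆ ℝ` with break points in `D`: it translates every pair of
points of `s` that no point of `D` separates. A break point belongs to the piece on its right. -/
def IsPiecewiseTranslation (g : ℝ → ℝ) (s D : Set ℝ) : Prop :=
  ∀ ⦃u v⦄, u ∈ s → v ∈ s → u ≤ v → Disjoint (Ioc u v) D → g v = v + (g u - u)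

namespace IsPiecewiseTranslation

variable {g : ℝ → ℝ} {s D F : Set ℝ} {e : ℕ → ℝ}

lemma mono {D' : Set ℝ} (hg : IsPiecewiseTranslation g s D) (hD : D ⊆ D') :
    IsPiecewiseTranslation g s D' := fun _ _ hu hv huv hdisj ↦
  hg hu hv huv (hdisj.mono_right hD)

lemma Ioo_add_subset {c l : ℝ} (hg : IsPiecewiseTranslation g s D) (hFs : F ⊆ s)
    (hF : ∀ z ∈ F, z ∉ D → g z ∈ F) (hc : c ∈ s) (hD : ∀ w ∈ D, c < w → ¬ Ioc c w ⊆ F)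
    (hl : Ioo c (c + l) ⊆ F) : Ioo (g c) (g c + l) ⊆ F := by
  intro y hy
  set z := y - (g c - c)
  have hz : z ∈ Ioo c (c + l) := ⟨by grind, by grind⟩
  have notMem_D : ∀ w ∈ Ioc c z, w ∉ D := fun w hw hwD ↦
    hD w hwD hw.1 fun v hv ↦ hl ⟨hv.1, hv.2.trans_lt (hw.2.trans_lt hz.2)⟩
  have hgz : g z = y := by
    rw [hg hc (hFs (hl hz)) hz.1.le (disjoint_left.2 notMem_D)]
    exact sub_add_cancel _ _
  exact hgz ▸ hF z (hl hz) (notMem_D z ⟨hz.1, le_rfl⟩)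

theorem exists_not_isLeftEnd (hg : IsPiecewiseTranslation g s D) (hD : D.Finite)
    (hs : Bornology.IsBounded s) (hFs : F ⊆ s) (hF : ∀ z ∈ F, z ∉ D → g z ∈ F)
    (he : Function.Injective e) (hes : ∀ n, e n ∈ s) (hstep : ∀ n, e (n + 1) = g (e n)) :
    ∃ n, ¬ IsLeftEnd F (e n) := by
  by_contra! h
  obtain ⟨N, hN⟩ := eventually_atTop.1 (eventually_not_Ioc_subset_of_isLeftEnd hD he h)
  obtain ⟨b, hb, hbF⟩ := mem_nhdsGT_iff_exists_Ioo_subset.1 (h N).1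
  set δ := b - e N
  have hδ : 0 < δ := sub_pos.2 hb
  have hrun : ∀ k, Ioo (e (N + k)) (e (N + k) + δ) ⊆ F := fun k ↦ by
    induction k with
    | zero => simpa [δ] using hbF
    | succ k ih =>
      rw [← add_assoc, hstep]
      exact hg.Ioo_add_subset hFs hF (hes _) (hN _ (Nat.le_add_right _ _)) ih
  have no_close : ∀ k l, e (N + k) < e (N + l) → δ ≤ e (N + l) - e (N + k) := fun k l hlt ↦ by
    by_contra! hclose
    exact (h (N + l)).not_Ioc_subset hlt fun z hz ↦ hrun k ⟨hz.1, by linarith [hz.2]⟩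
  obtain ⟨k, l, hkl, hdist⟩ := exists_lt_dist_lt hs (fun n ↦ hes (N + n)) hδ
  rw [Real.dist_eq, abs_sub_lt_iff] at hdist
  rcases lt_trichotomy (e (N + k)) (e (N + l)) with hlt | heq | hlt
  · linarith [no_close k l hlt]
  · exact hkl.ne (Nat.add_left_cancel (he heq))
  · linarith [no_close l k hlt]

end IsPiecewiseTranslation

lemma eventually_iterate_eq_add {G : Type*} [AddCommGroup G] {g : G → G} {L : G → Filter G} {c : G}
    (n : ℕ)
    (hL : ∀ a t, map (· + t) (L a) = L (a + t))
    (h : ∀ k < n, ∀ᶠ z in L (g^[k] c), g z = z + (g (g^[k] c) - g^[k] c)) :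
    ∀ᶠ z in L c, g^[n] z = z + (g^[n] c - c) := by
  induction n with
  | zero => simp
  | succ n ih =>
    have hn := h n n.lt_succ_self
    rw [← add_sub_cancel c (g^[n] c), ← hL, eventually_map, add_sub_cancel] at hn
    filter_upwards [ih fun k hk ↦ h k (hk.trans n.lt_succ_self), hn] with z hz hgz
    rw [Function.iterate_succ_apply', Function.iterate_succ_apply', hz, hgz]
    abel

namespace IntervalExchange

variable (T : IntervalExchange)

/-- The right end point of the `i`-th interval of the partition. -/
noncomputable def rightEnd (i : Fin T.d) : ℝ :=
  if h : (i : ℕ) + 1 < T.d then T.p ⟨(i : ℕ) + 1, h⟩ else 1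

lemma p_lt_rightEnd (i : Fin T.d) : T.p i < T.rightEnd i := by
  unfold rightEnd
  split_ifs
  · exact T.mono (Nat.lt_succ_self _)
  · exact T.lt_one i

lemma p_mem_piece (i : Fin T.d) : T.p i ∈ T.piece i := ⟨le_rfl, T.p_lt_rightEnd i⟩

lemma rightEnd_eq_one_or_mem_range (i : Fin T.d) : T.rightEnd i = 1 ∨ T.rightEnd i ∈ range T.p := by
  unfold rightEnd
  split_ifs
  exacts [.inr ⟨_, rfl⟩, .inl rfl]

lemma rightEnd_le_one (i : Fin T.d) : T.rightEnd i ≤ 1 := by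
  rcases T.rightEnd_eq_one_or_mem_range i with h | ⟨j, h⟩
  exacts [h.le, h ▸ (T.lt_one j).le]

lemma rightEnd_le_p {i j : Fin T.d} (h : i < j) : T.rightEnd i ≤ T.p j := by
  have hij : (i : ℕ) + 1 ≤ j := h
  rw [rightEnd, dif_pos (hij.trans_lt j.2)]
  exact T.mono.monotone hij

lemma d_pos : 0 < T.d := zero_lt_two.trans_le T.two_le

lemma neg_one_mem_range_p : -1 ∈ range T.p := ⟨_, T.first T.d_pos⟩

lemma p_mem_Ico (i : Fin T.d) : T.p i ∈ Ico (-1) 1 :=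
  ⟨T.first T.d_pos ▸ T.mono.monotone (Nat.zero_le (i : ℕ)), T.lt_one i⟩

lemma piece_subset_Ico (i : Fin T.d) : T.piece i ⊆ Ico (-1) 1 :=
  Ico_subset_Ico (T.p_mem_Ico i).1 (T.rightEnd_le_one i)

variable {T} {F : Set ℝ} {c x : ℝ}

lemma exists_mem_piece (hc : c ∈ Ico (-1) 1) : ∃ i, c ∈ T.piece i := by
  obtain ⟨i, hi, hmax⟩ := (toFinite {i | T.p i ≤ c}).exists_maximal
    ⟨⟨0, T.d_pos⟩, (T.first T.d_pos).trans_le hc.1⟩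
  refine ⟨i, hi, ?_⟩
  split_ifs with h
  · by_contra! hle
    have : (i : ℕ) + 1 ≤ i := hmax hle (Nat.le_succ (i : ℕ))
    omega
  · exact hc.2

lemma f_eq_add_of_mem_piece {i : Fin T.d} {u v : ℝ} (hu : u ∈ T.piece i) (hv : v ∈ T.piece i) :
    T.f v = v + (T.f u - u) := by
  obtain ⟨t, ht⟩ := T.translate i
  rw [ht u hu, ht v hv]
  ring

lemma isPiecewiseTranslation_f : IsPiecewiseTranslation T.f (Ico (-1) 1) (range T.p) := by
  intro u v hu hv huv hdisj
  obtain ⟨i, hi⟩ := exists_mem_piece hu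
  refine f_eq_add_of_mem_piece hi ⟨hi.1.trans huv, ?_⟩
  rcases T.rightEnd_eq_one_or_mem_range i with h | h
  · exact hv.2.trans_eq h.symm
  · exact lt_of_not_ge fun hle ↦ disjoint_left.1 hdisj ⟨hi.2, hle⟩ h

/-- The inverse of `T.f` on `[-1, 1)`, with junk values elsewhere. -/
noncomputable def inv (T : IntervalExchange) : ℝ → ℝ := Function.invFunOn T.f (Ico (-1) 1)

lemma inv_mem (hx : x ∈ Ico (-1) 1) : T.inv x ∈ Ico (-1) 1 :=
  Function.invFunOn_mem (T.bij.surjOn hx)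

lemma f_inv (hx : x ∈ Ico (-1) 1) : T.f (T.inv x) = x :=
  Function.invFunOn_eq (T.bij.surjOn hx)

lemma inv_iterate_mem (hx : x ∈ Ico (-1) 1) (n : ℕ) : T.inv^[n] x ∈ Ico (-1) 1 :=
  MapsTo.iterate (fun _ ↦ inv_mem) n hx

lemma iterate_iterate_inv (hx : x ∈ Ico (-1) 1) (n : ℕ) : T.f^[n] (T.inv^[n] x) = x := by
  induction n with
  | zero => rfl
  | succ n ih =>
    rwa [Function.iterate_succ_apply, Function.iterate_succ_apply', f_inv (inv_iterate_mem hx n)]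

lemma isPiecewiseTranslation_inv :
    IsPiecewiseTranslation T.inv (Ico (-1) 1) (T.f '' range T.p) := by
  intro u v hu hv huv hdisj
  obtain ⟨i, hi⟩ := exists_mem_piece (T := T) (inv_mem hv)
  have hfp := f_eq_add_of_mem_piece hi (T.p_mem_piece i)
  rw [f_inv hv] at hfp
  have hpu : T.f (T.p i) ≤ u := le_of_not_gt fun hlt ↦
    disjoint_left.1 hdisj ⟨hlt, by linarith [hi.1]⟩ (mem_image_of_mem _ ⟨i, rfl⟩)
  have hu' : u + (T.inv v - v) ∈ T.piece i := ⟨by linarith, by linarith [hi.2]⟩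
  have hfu : T.f (u + (T.inv v - v)) = u := by
    rw [f_eq_add_of_mem_piece hi hu', f_inv hv]
    ring
  have hinvu : T.inv u = u + (T.inv v - v) :=
    T.bij.injOn (inv_mem hu) (T.piece_subset_Ico i hu') ((f_inv hu).trans hfu.symm)
  rw [hinvu]
  ring

lemma eventually_nhdsGT_f_eq_add (hc : c ∈ Ico (-1) 1) :
    ∀ᶠ z in 𝓝[>] c, T.f z = z + (T.f c - c) := by
  obtain ⟨i, hi⟩ := exists_mem_piece (T := T) hc
  filter_upwards [Ioo_mem_nhdsGT hi.2] with z hz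
  exact f_eq_add_of_mem_piece hi ⟨hi.1.trans hz.1.le, hz.2⟩

lemma eventually_nhds_f_eq_add (hc : c ∈ Ico (-1) 1) (hcp : c ∉ range T.p) :
    ∀ᶠ z in 𝓝 c, T.f z = z + (T.f c - c) := by
  obtain ⟨i, hi⟩ := exists_mem_piece (T := T) hc
  have hpc : T.p i < c := hi.1.lt_of_ne fun h ↦ hcp ⟨i, h⟩
  filter_upwards [Ico_mem_nhds hpc hi.2] with z hz
  exact f_eq_add_of_mem_piece hi hz

lemma map_f_nhdsGT (hc : c ∈ Ico (-1) 1) : map T.f (𝓝[>] c) = 𝓝[>] (T.f c) := by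
  rw [map_congr (eventually_nhdsGT_f_eq_add hc), map_add_right_nhdsGT, add_sub_cancel]

lemma iterate_mem (hx : x ∈ Ico (-1) 1) (n : ℕ) : T.f^[n] x ∈ Ico (-1) 1 :=
  T.bij.mapsTo.iterate n hx

lemma iterate_injective (hx : x ∈ Ico (-1) 1) (hper : x ∉ Function.periodicPts T.f) :
    Function.Injective fun n ↦ T.f^[n] x := by
  refine .of_lt_imp_ne fun k l hkl h ↦ hper ⟨l - k, Nat.sub_pos_of_lt hkl, ?_⟩
  refine T.bij.injOn.iterate T.bij.mapsTo k (iterate_mem hx _) hx ?_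
  rw [← Function.iterate_add_apply, Nat.add_sub_cancel' hkl.le]
  exact h.symm

/-- `F ∩ [-1, 1)` is completely invariant under `T.f`. -/
def IsInvariant (T : IntervalExchange) (F : Set ℝ) : Prop :=
  ∀ z ∈ Ico (-1) 1, (T.f z ∈ F ↔ z ∈ F)

lemma IsInvariant.compl (hF : T.IsInvariant F) : T.IsInvariant Fᶜ := fun z hz ↦
  not_congr (hF z hz)

lemma isLeftEnd_f_iff (hF : T.IsInvariant F) (hc : c ∈ Ico (-1) 1) (hcp : c ∉ range T.p) :
    IsLeftEnd F (T.f c) ↔ IsLeftEnd F c := by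
  have hc' : -1 < c := hc.1.lt_of_ne fun h ↦ hcp (h ▸ T.neg_one_mem_range_p)
  rw [← add_sub_cancel c (T.f c), ← IsLeftEnd.preimage_add_right_iff]
  refine IsLeftEnd.congr ?_
  filter_upwards [eventually_nhds_f_eq_add hc hcp, Ico_mem_nhds hc' hc.2] with z hfz hz
  rw [← hF z hz, hfz, mem_preimage]

lemma f_mem_Ioo_union_Ioo (hf0 : 0 ∈ T.f '' range T.p) (hc : c ∈ Ico (-1) 1)
    (hcp : c ∉ range T.p) : T.f c ∈ Ioo (-1) 0 ∪ Ioo 0 1 := by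
  have hfc := T.bij.mapsTo hc
  have ne_zero : T.f c ≠ 0 := by
    obtain ⟨_, ⟨i, rfl⟩, hi⟩ := hf0
    exact fun h ↦ hcp ⟨i, T.bij.injOn (T.p_mem_Ico i) hc (hi.trans h.symm)⟩
  have ne_neg_one : T.f c ≠ -1 := by
    obtain ⟨i, hi⟩ := exists_mem_piece (T := T) hc
    have hpc : T.p i < c := hi.1.lt_of_ne fun h ↦ hcp ⟨i, h⟩
    linarith [f_eq_add_of_mem_piece hi (T.p_mem_piece i), (T.bij.mapsTo (T.p_mem_Ico i)).1]
  rcases ne_zero.lt_or_gt with h | h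
  exacts [.inl ⟨hfc.1.lt_of_ne' ne_neg_one, h⟩, .inr ⟨h, hfc.2⟩]

lemma Ioo_union_Ioo_subset_Ico : Ioo (-1 : ℝ) 0 ∪ Ioo 0 1 ⊆ Ico (-1) 1 := by grind

lemma not_isLeftEnd_p (hMK : T.ModifiedKeane) (hF : T.IsInvariant F) {j : Fin T.d}
    (hj : T.p j ∈ Ioo (-1) 0 ∪ Ioo 0 1) : ¬ IsLeftEnd F (T.p j) := by
  intro hleft
  have hne : ∀ m, 1 ≤ m → ∀ i, T.f^[m] (T.p i) ≠ T.p j := fun m hm i ↦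
    hMK m hm i j (by grind) (by grind)
  set e : ℕ → ℝ := fun n ↦ T.inv^[n] (T.p j)
  have hstep : ∀ n, e (n + 1) = T.inv (e n) := fun n ↦ Function.iterate_succ_apply' ..
  have he : ∀ n, e n ∈ Ico (-1) 1 := inv_iterate_mem (T.p_mem_Ico j)
  have hiter : ∀ n, T.f^[n] (e n) = T.p j := iterate_iterate_inv (T.p_mem_Ico j)
  have hinj : Function.Injective e := by
    refine .of_lt_imp_ne fun k l hkl hkl_eq ↦ hne (l - k) (Nat.sub_pos_of_lt hkl) j ?_
    have hl := hiter l
    rwa [← hkl_eq, ← Nat.sub_add_cancel hkl.le, Function.iterate_add_apply, hiter] at hl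
  have hnotMem : ∀ n, e (n + 1) ∉ range T.p := fun n ⟨i, hi⟩ ↦
    hne (n + 1) n.succ_pos i (hi ▸ hiter (n + 1))
  have hleft_e : ∀ n, IsLeftEnd F (e n) := fun n ↦ by
    induction n with
    | zero => exact hleft
    | succ n ih => rwa [← isLeftEnd_f_iff hF (he _) (hnotMem n), hstep, f_inv (he n)]
  obtain ⟨n, hn⟩ := isPiecewiseTranslation_inv.exists_not_isLeftEnd ((finite_range _).image _)
    (Metric.isBounded_Ico _ _) (F := F ∩ Ico (-1) 1) inter_subset_right
    (fun z hz _ ↦ ⟨(hF _ (inv_mem hz.2)).1 (by rw [f_inv hz.2]; exact hz.1), inv_mem hz.2⟩)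
    hinj he hstep
  exact hn ((hleft_e n).inter_Ico (he n))

lemma isLeftEnd_iterate (hMK : T.ModifiedKeane) (hf0 : 0 ∈ T.f '' range T.p)
    (hF : T.IsInvariant F) (hc : c ∈ Ioo (-1) 0 ∪ Ioo 0 1) (hleft : IsLeftEnd F c) (k : ℕ) :
    T.f^[k] c ∉ range T.p ∧ IsLeftEnd F (T.f^[k] c) := by
  have notMem_range : ∀ b ∈ Ioo (-1) 0 ∪ Ioo 0 1, IsLeftEnd F b → b ∉ range T.p := by
    rintro _ hb hbF ⟨j, rfl⟩
    exact not_isLeftEnd_p hMK hF hb hbF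
  have main : T.f^[k] c ∈ Ioo (-1) 0 ∪ Ioo 0 1 ∧ IsLeftEnd F (T.f^[k] c) := by
    induction k with
    | zero => exact ⟨hc, hleft⟩
    | succ k ih =>
      have hkI := Ioo_union_Ioo_subset_Ico ih.1
      have hkp := notMem_range _ ih.1 ih.2
      rw [Function.iterate_succ_apply']
      exact ⟨f_mem_Ioo_union_Ioo hf0 hkI hkp, (isLeftEnd_f_iff hF hkI hkp).2 ih.2⟩
  exact ⟨notMem_range _ main.1 main.2, main.2⟩

lemma not_isLeftEnd_of_aperiodic (hMK : T.ModifiedKeane) (hf0 : 0 ∈ T.f '' range T.p)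
    (hper : ∀ x ∈ Ico (-1) 1, x ∉ Function.periodicPts T.f) (hF : T.IsInvariant F)
    (hc : c ∈ Ioo (-1) 0 ∪ Ioo 0 1) : ¬ IsLeftEnd F c := by
  intro hleft
  have hcI := Ioo_union_Ioo_subset_Ico hc
  obtain ⟨n, hn⟩ := isPiecewiseTranslation_f.exists_not_isLeftEnd (finite_range _)
    (Metric.isBounded_Ico _ _) (F := F ∩ Ico (-1) 1) inter_subset_right
    (fun z hz _ ↦ ⟨(hF z hz.2).2 hz.1, T.bij.mapsTo hz.2⟩)
    (iterate_injective hcI (hper c hcI)) (iterate_mem hcI)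
    (fun n ↦ Function.iterate_succ_apply' ..)
  exact hn ((isLeftEnd_iterate hMK hf0 hF hc hleft n).2.inter_Ico (iterate_mem hcI n))

lemma eventually_nhdsGT_mem_Ioo {z : ℝ} (hz : z ∈ Ico (-1) 1) :
    ∀ᶠ w in 𝓝[>] z, (z < 0 → w ∈ Ioo (-1) 0) ∧ (0 ≤ z → w ∈ Ioo 0 1) := by
  rcases lt_or_ge z 0 with h | h
  · filter_upwards [Ioo_mem_nhdsGT h] with w hw
    exact ⟨fun _ ↦ ⟨hz.1.trans_lt hw.1, hw.2⟩, fun h' ↦ absurd h h'.not_gt⟩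
  · filter_upwards [Ioo_mem_nhdsGT hz.2] with w hw
    exact ⟨fun h' ↦ absurd h h'.not_ge, fun _ ↦ ⟨h.trans_lt hw.1, hw.2⟩⟩

lemma not_Ioo_subset_and_Ioo_subset_compl (hhalf : T.f '' Ico (-1) 0 ≠ Ico (-1) 0)
    (hF : T.IsInvariant F) : ¬ (Ioo (-1) 0 ⊆ F ∧ Ioo 0 1 ⊆ Fᶜ) := by
  rintro ⟨hneg, hpos⟩
  have germ : ∀ z ∈ Ico (-1) 1, ∀ᶠ w in 𝓝[>] z, w ∈ Ico (-1) 1 ∧ (w ∈ F ↔ z < 0) := by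
    intro z hz
    filter_upwards [eventually_nhdsGT_mem_Ioo hz] with w hw
    rcases lt_or_ge z 0 with h | h
    · exact ⟨Ioo_union_Ioo_subset_Ico (.inl (hw.1 h)), iff_of_true (hneg (hw.1 h)) h⟩
    · exact ⟨Ioo_union_Ioo_subset_Ico (.inr (hw.2 h)), iff_of_false (hpos (hw.2 h)) h.not_gt⟩
  have f_neg_iff : ∀ z ∈ Ico (-1) 1, (T.f z < 0 ↔ z < 0) := by
    intro z hz
    have hfz := germ _ (T.bij.mapsTo hz)
    rw [← map_f_nhdsGT hz, eventually_map] at hfz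
    obtain ⟨w, hfw, hw⟩ := (hfz.and (germ z hz)).exists
    exact hfw.2.symm.trans ((hF w hw.1).trans hw.2)
  refine hhalf (Subset.antisymm ?_ fun y hy ↦ ?_)
  · rintro _ ⟨z, hz, rfl⟩
    have hzI : z ∈ Ico (-1) 1 := ⟨hz.1, hz.2.trans zero_lt_one⟩
    exact ⟨(T.bij.mapsTo hzI).1, (f_neg_iff z hzI).2 hz.2⟩
  · obtain ⟨z, hz, rfl⟩ := T.bij.surjOn (⟨hy.1, hy.2.trans zero_lt_one⟩ : y ∈ Ico (-1) 1)
    exact ⟨z, ⟨hz.1, (f_neg_iff z hz).1 hy.2⟩, rfl⟩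

lemma Ioo_union_Ioo_subset_or_Ico_subset_compl (hhalf : T.f '' Ico (-1) 0 ≠ Ico (-1) 0)
    (hF : T.IsInvariant F) (hopen : ∀ z ∈ Ico (-1) 1, z ∈ F → ∀ᶠ w in 𝓝[>] z, w ∈ F)
    (hleft : ∀ c ∈ Ioo (-1) 0 ∪ Ioo 0 1, ¬ IsLeftEnd F c)
    (hleft' : ∀ c ∈ Ioo (-1) 0 ∪ Ioo 0 1, ¬ IsLeftEnd Fᶜ c) :
    Ioo (-1) 0 ∪ Ioo 0 1 ⊆ F ∨ Ico (-1) 1 ⊆ Fᶜ := by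
  have hneg := Ioo_subset_or_Ioo_subset_compl
    (fun z hz ↦ hopen z (Ioo_union_Ioo_subset_Ico (.inl hz)))
    (fun c hc ↦ hleft c (.inl hc)) (fun c hc ↦ hleft' c (.inl hc))
  have hpos := Ioo_subset_or_Ioo_subset_compl
    (fun z hz ↦ hopen z (Ioo_union_Ioo_subset_Ico (.inr hz)))
    (fun c hc ↦ hleft c (.inr hc)) (fun c hc ↦ hleft' c (.inr hc))
  rcases hneg with hneg | hneg <;> rcases hpos with hpos | hpos
  · exact .inl (union_subset hneg hpos)
  · exact (not_Ioo_subset_and_Ioo_subset_compl hhalf hF ⟨hneg, hpos⟩).elim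
  · exact (not_Ioo_subset_and_Ioo_subset_compl hhalf hF.compl
      ⟨hneg, (compl_compl F).symm ▸ hpos⟩).elim
  · refine .inr fun z hz hzF ↦ ?_
    obtain ⟨w, hwF, hw⟩ := ((hopen z hz hzF).and (eventually_nhdsGT_mem_Ioo hz)).exists
    rcases lt_or_ge z 0 with h | h
    exacts [hneg (hw.1 h) hwF, hpos (hw.2 h) hwF]

lemma isInvariant_ptsOfPeriod (q : ℕ) : T.IsInvariant (Function.ptsOfPeriod T.f q) := by
  intro z hz
  change T.f^[q] (T.f z) = T.f z ↔ T.f^[q] z = z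
  rw [← Function.iterate_succ_apply, Function.iterate_succ_apply']
  exact T.bij.injOn.eq_iff (iterate_mem hz q) hz

lemma eventually_nhdsGT_mem_ptsOfPeriod {q : ℕ} (hc : c ∈ Ico (-1) 1)
    (hcq : c ∈ Function.ptsOfPeriod T.f q) :
    ∀ᶠ z in 𝓝[>] c, z ∈ Function.ptsOfPeriod T.f q := by
  have hgerm := eventually_iterate_eq_add (g := T.f) (L := fun a ↦ 𝓝[>] a) q
    (fun _ _ ↦ map_add_right_nhdsGT)
    fun k _ ↦ eventually_nhdsGT_f_eq_add (iterate_mem hc k)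
  filter_upwards [hgerm] with z hz
  have : T.f^[q] c = c := hcq
  rwa [this, sub_self, add_zero] at hz

lemma eventually_nhds_mem_ptsOfPeriod_iff {q : ℕ} (hc : c ∈ Ico (-1) 1)
    (hcp : ∀ k, T.f^[k] c ∉ range T.p) :
    ∀ᶠ z in 𝓝 c, (z ∈ Function.ptsOfPeriod T.f q ↔ c ∈ Function.ptsOfPeriod T.f q) := by
  have hgerm := eventually_iterate_eq_add (g := T.f) (L := 𝓝) q (fun a t ↦ map_add_right_nhds t a)
    fun k _ ↦ eventually_nhds_f_eq_add (iterate_mem hc k) (hcp k)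
  filter_upwards [hgerm] with z hz
  change T.f^[q] z = z ↔ T.f^[q] c = c
  rw [hz, add_eq_left, sub_eq_zero]

theorem notMem_periodicPts (hf0 : 0 ∈ T.f '' range T.p)
    (hbreak : ∃ i, T.p i ∈ Ioo (-1) 0 ∪ Ioo 0 1) (hhalf : T.f '' Ico (-1) 0 ≠ Ico (-1) 0)
    (hMK : T.ModifiedKeane) (hx : x ∈ Ico (-1) 1) : x ∉ Function.periodicPts T.f := by
  rintro ⟨q, hq, hxq⟩
  have hinv := isInvariant_ptsOfPeriod (T := T) q
  have hgerm : ∀ {G : Set ℝ}, T.IsInvariant G → ∀ c ∈ Ioo (-1) 0 ∪ Ioo 0 1, IsLeftEnd G c →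
      ∀ᶠ z in 𝓝 c, (z ∈ Function.ptsOfPeriod T.f q ↔ c ∈ Function.ptsOfPeriod T.f q) :=
    fun hG c hc h ↦ eventually_nhds_mem_ptsOfPeriod_iff (Ioo_union_Ioo_subset_Ico hc)
      fun k ↦ (isLeftEnd_iterate hMK hf0 hG hc h k).1
  rcases Ioo_union_Ioo_subset_or_Ico_subset_compl hhalf hinv
    (fun z hz ↦ eventually_nhdsGT_mem_ptsOfPeriod hz)
    (fun c hc h ↦ h.not_eventually_mem_iff (hgerm hinv c hc h))
    (fun c hc h ↦ h.not_eventually_mem_iff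
      ((hgerm hinv.compl c hc h).mono fun _ ↦ not_congr)) with hall | hnone
  · obtain ⟨i, hi⟩ := hbreak
    exact hMK q hq i i (by grind) (by grind) (hall hi)
  · exact hnone hx hxq

/-- The forward orbit of `x` under `T.f`. -/
def orbit (T : IntervalExchange) (x : ℝ) : Set ℝ := range fun n ↦ T.f^[n] x

lemma f_mem_orbit_iff {z : ℝ} (hx : x ∈ Ico (-1) 1) (hz : z ∈ Ico (-1) 1) (hzx : T.f z ≠ x) :
    T.f z ∈ T.orbit x ↔ z ∈ T.orbit x := by
  constructor
  · rintro ⟨_ | n, hn⟩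
    · exact (hzx hn.symm).elim
    · exact ⟨n, T.bij.injOn (iterate_mem hx n) hz
        ((Function.iterate_succ_apply' ..).symm.trans hn)⟩
  · rintro ⟨n, rfl⟩
    exact ⟨n + 1, Function.iterate_succ_apply' ..⟩

lemma exists_frequently_nhdsGT_iterate_mem_orbit (hx : x ∈ Ico (-1) 1)
    (hper : x ∉ Function.periodicPts T.f) : ∃ n, ∃ᶠ w in 𝓝[>] (T.f^[n] x), w ∈ T.orbit x := by
  by_contra! h
  -- The complement of the orbit fails to be forward invariant only at the preimage of `x`, so this
  -- point is counted as a break point.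
  have hPT := isPiecewiseTranslation_f.mono (subset_insert (T.inv x) (range T.p))
  have hmaps : ∀ z ∈ (T.orbit x)ᶜ ∩ Ico (-1) 1, z ∉ insert (T.inv x) (range T.p) →
      T.f z ∈ (T.orbit x)ᶜ ∩ Ico (-1) 1 := by
    rintro z ⟨hz, hzI⟩ hzD
    have hzx : T.f z ≠ x := fun hzx ↦
      hzD (.inl (T.bij.injOn hzI (inv_mem hx) (hzx.trans (f_inv hx).symm)))
    exact ⟨mt (f_mem_orbit_iff hx hzI hzx).1 hz, T.bij.mapsTo hzI⟩
  obtain ⟨n, hn⟩ := hPT.exists_not_isLeftEnd ((finite_range _).insert _) (Metric.isBounded_Ico _ _)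
    inter_subset_right hmaps (iterate_injective hx hper) (iterate_mem hx)
    (fun n ↦ Function.iterate_succ_apply' ..)
  have hleft : IsLeftEnd (T.orbit x)ᶜ (T.f^[n] x) := .of_notMem (h n) (not_not.2 ⟨n, rfl⟩)
  exact hn (hleft.inter_Ico (iterate_mem hx n))

lemma isInvariant_setOf_eventually_notMem_orbit (hx : x ∈ Ico (-1) 1) :
    T.IsInvariant {z | ∀ᶠ w in 𝓝[>] z, w ∉ T.orbit x} := by
  intro z hz
  have hne : ∀ᶠ w in 𝓝[>] (T.f z), w ≠ x :=
    (nhdsGT_le_nhdsNE _).trans (nhdsNE_le_cofinite _) (finite_singleton x).compl_mem_cofinite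
  rw [← map_f_nhdsGT hz, eventually_map] at hne
  rw [mem_ofPred, ← map_f_nhdsGT hz, eventually_map]
  refine eventually_congr ?_
  filter_upwards [hne, Ico_mem_nhdsGT_of_mem hz] with w hwx hw
  exact not_congr (f_mem_orbit_iff hx hw hwx)

lemma IsInvariant.iterate_mem_iff (hF : T.IsInvariant F) (hx : x ∈ Ico (-1) 1) (n : ℕ) :
    T.f^[n] x ∈ F ↔ x ∈ F := by
  induction n with
  | zero => rfl
  | succ n ih => rw [Function.iterate_succ_apply', hF _ (iterate_mem hx n), ih]

lemma not_Ioo_union_Ioo_subset (hx : x ∈ Ico (-1) 1) (hper : x ∉ Function.periodicPts T.f)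
    (hF : T.IsInvariant F) (hxF : x ∉ F) : ¬ Ioo (-1) 0 ∪ Ioo 0 1 ⊆ F := by
  intro hsub
  have horbit : T.orbit x ⊆ {-1, 0} := by
    rintro _ ⟨n, rfl⟩
    have hnI := iterate_mem (T := T) hx n
    have hn := mt (@hsub _) (mt (hF.iterate_mem_iff hx n).1 hxF)
    grind
  exact infinite_range_of_injective (iterate_injective hx hper) ((toFinite _).subset horbit)

theorem frequently_nhdsGT_mem_orbit (hf0 : 0 ∈ T.f '' range T.p)
    (hhalf : T.f '' Ico (-1) 0 ≠ Ico (-1) 0) (hMK : T.ModifiedKeane)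
    (hper : ∀ x ∈ Ico (-1) 1, x ∉ Function.periodicPts T.f) {y : ℝ} (hx : x ∈ Ico (-1) 1)
    (hy : y ∈ Ico (-1) 1) : ∃ᶠ w in 𝓝[>] y, w ∈ T.orbit x := by
  set F : Set ℝ := {z | ∀ᶠ w in 𝓝[>] z, w ∉ T.orbit x}
  have hF : T.IsInvariant F := isInvariant_setOf_eventually_notMem_orbit hx
  have hxF : x ∉ F := by
    obtain ⟨n, hn⟩ := exists_frequently_nhdsGT_iterate_mem_orbit hx (hper x hx)
    exact mt (hF.iterate_mem_iff hx n).2 hn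
  have hopen : ∀ z ∈ Ico (-1) 1, z ∈ F → ∀ᶠ w in 𝓝[>] z, w ∈ F :=
    fun z _ ↦ eventually_eventually_nhdsGT
  have hnone := (Ioo_union_Ioo_subset_or_Ico_subset_compl hhalf hF hopen
    (fun c hc ↦ not_isLeftEnd_of_aperiodic hMK hf0 hper hF hc)
    (fun c hc ↦ not_isLeftEnd_of_aperiodic hMK hf0 hper hF.compl hc)).resolve_left
      (not_Ioo_union_Ioo_subset hx (hper x hx) hF hxF)
  exact hnone hy

lemma iUnion_piece_lt (k : Fin T.d) :
    ⋃ i : Fin T.d, ⋃ (_ : (i : ℕ) < k), T.piece i = Ico (-1) (T.p k) := by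
  ext z
  simp only [mem_iUnion, exists_prop]
  constructor
  · rintro ⟨i, hik, hi⟩
    exact ⟨(T.piece_subset_Ico i hi).1, hi.2.trans_le (T.rightEnd_le_p hik)⟩
  · intro hz
    obtain ⟨i, hi⟩ := exists_mem_piece (T := T) ⟨hz.1, hz.2.trans (T.lt_one k)⟩
    exact ⟨i, T.mono.lt_iff_lt.1 (hi.1.trans_lt hz.2), hi⟩

lemma Irreducible.image_Ico_ne (hIrr : T.Irreducible) {k : Fin T.d} (hk : T.p k ≠ -1) :
    T.f '' Ico (-1) (T.p k) ≠ Ico (-1) (T.p k) := by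
  have hk0 : 0 < (k : ℕ) := Nat.pos_of_ne_zero fun h ↦
    hk ((congrArg T.p (Fin.ext h)).trans (T.first T.d_pos))
  exact iUnion_piece_lt k ▸ hIrr k hk0 k.2

lemma BilliardLike.zero_mem_image_range_p (hBL : T.BilliardLike) : 0 ∈ T.f '' range T.p := by
  obtain ⟨z, hz, hfz⟩ := T.bij.surjOn (⟨by norm_num, by norm_num⟩ : (0 : ℝ) ∈ Ico (-1) 1)
  obtain ⟨i, hi⟩ := exists_mem_piece (T := T) hz
  refine ⟨T.p i, ⟨i, rfl⟩, ?_⟩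
  have hfp := f_eq_add_of_mem_piece hi (T.p_mem_piece i)
  have hle : T.f (T.p i) ≤ 0 := by linarith [hi.1]
  rcases hBL.2.2.1 i with himage | himage
  · exact absurd (himage ⟨z, hi, hfz⟩).2 (lt_irrefl 0)
  · exact hle.antisymm (himage ⟨_, T.p_mem_piece i, rfl⟩).1

lemma BilliardLike.exists_p_mem_Ioo_union_Ioo (hBL : T.BilliardLike) :
    ∃ i, T.p i ∈ Ioo (-1) 0 ∪ Ioo 0 1 := by
  obtain ⟨i, j, hij, hi, hj⟩ := hBL.2.2.2.1
  have hpi := hi (T.p_mem_piece i)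
  have hpj := hj (T.p_mem_piece j)
  rcases (T.mono.injective.ne hij).lt_or_gt with hlt | hlt
  exacts [⟨j, .inl ⟨hpi.1.trans_lt hlt, hpj.2⟩⟩, ⟨i, .inl ⟨hpj.1.trans_lt hlt, hpi.2⟩⟩]

end IntervalExchange

theorem irreducible_modifiedKeane_minimal_general
    (T : IntervalExchange) (hf0 : 0 ∈ T.f '' range T.p)
    (hbreak : ∃ i, T.p i ∈ Ioo (-1) 0 ∪ Ioo 0 1) (hhalf : T.f '' Ico (-1) 0 ≠ Ico (-1) 0)
    (hMK : T.ModifiedKeane) :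
    ∀ x ∈ Ico (-1 : ℝ) 1, ∀ y ∈ Ico (-1 : ℝ) 1, ∀ ε : ℝ, 0 < ε → ∃ n : ℕ, |T.f^[n] x - y| < ε := by
  intro x hx y hy ε hε
  have hfreq := IntervalExchange.frequently_nhdsGT_mem_orbit hf0 hhalf hMK
    (fun _ ↦ IntervalExchange.notMem_periodicPts hf0 hbreak hhalf hMK) hx hy
  have hball : ∀ᶠ w in 𝓝[>] y, w ∈ Metric.ball y ε :=
    nhdsWithin_le_nhds (Metric.ball_mem_nhds y hε)
  obtain ⟨_, ⟨n, rfl⟩, hn⟩ := (hfreq.and_eventually hball).exists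
  exact ⟨n, hn⟩

theorem irreducible_modifiedKeane_minimal
    (T : IntervalExchange) (hBL : T.BilliardLike) (hIrr : T.Irreducible)
    (hMK : T.ModifiedKeane) :
    ∀ x ∈ Set.Ico (-1 : ℝ) 1, ∀ y ∈ Set.Ico (-1 : ℝ) 1, ∀ ε : ℝ, 0 < ε →
      ∃ n : ℕ, |T.f^[n] x - y| < ε := by
  obtain ⟨k, hk⟩ := hBL.1
  exact irreducible_modifiedKeane_minimal_general T hBL.zero_mem_image_range_p
    hBL.exists_p_mem_Ioo_union_Ioo (hk ▸ hIrr.image_Ico_ne (by norm_num [hk])) hMK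
end

section
/- Let r₁ = 5/11 + 1/(22π) and r₂ = 5/11 − 1/(220π), and let f = f_{r₁,r₂} be the associated eight-interval exchange transformation of [−1, 1). Then f is minimal: for every x ∈ [−1, 1), the forward orbit {f^n(x) : n ≥ 0} is dense in [−1, 1). In particular f has no periodic points. -/
/-- The eight-interval exchange transformation of `[−1, 1)` associated with the rotation
numbers `r₁`, `r₂` (case `1/4 + r₂/2 − r₁ > 0`), encoding the billiard dynamics in a
domain bounded by two confocal ellipses and two segments on their smaller axis. -/
noncomputable def fIET (r1 r2 : ℝ) (ξ : ℝ) : ℝ :=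
  if ξ < r1 - r2 - 1 then ξ + r1 + 3 / 2
  else if ξ < r1 - r2 - 1 / 2 then ξ + r2
  else if ξ < -r1 then ξ + r1
  else if ξ < 0 then ξ + r1 - 1
  else if ξ < r1 - r2 then ξ + r1 - 1 / 2
  else if ξ < r1 - r2 + 1 / 2 then ξ + r2
  else if ξ < 1 - r1 then ξ + r1
  else ξ + r1 - 1

/-!
Fix an interval `J` and let `V` be the set of points whose orbit meets `J`. As the return times to
`J` are bounded, `V` is a finite union of half-open intervals, and `V` is invariant under `f`. In
the absence of periodic points an endpoint of `V` cannot have its whole forward or backward orbit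
among the finitely many endpoints of `V`, so it lies on a connection, that is, on an orbit segment
joining two breakpoints of `f`. This is Keane's argument.

Every step of `f` is a translation by `r₁` or by `r₂` modulo `1/2`, and since `r₂ ≥ 1/4` there are
never three consecutive translations by `r₂`. An orbit segment composed of `a` translations by `r₁`
and `b` by `r₂` thus satisfies `b ≤ 2a + 2`. On the other hand, `a r₁ + b r₂ ∈ ½ℤ` forces `b = 10a`,
since `π` is irrational. Hence there are no periodic points, and, the breakpoints being small
combinations of `r₁`, `r₂` and `1/2`, the only connections are `-r₁ ↦ -1` and `1 - r₁ ↦ 0`. So `V`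
can only have an endpoint at `0` inside `(-1, 1)`, and `f (-1) = r₁ + 1/2 > 0` excludes this one.
-/

open Set Filter Topology Real

section StepFunction

variable {R T : Type*} [LinearOrder R] {g : R → T} {F : Set R} {α β : R}

/-- A right-continuous step function on `[α, β)` with all its breakpoints in `F`, encoded as:
`g` takes equal values at two points which no element of `F` separates, an element of `F`
belonging to the interval on its right. -/
def IsStepOn (g : R → T) (F : Set R) (α β : R) : Prop :=
  ∀ ⦃w w' : R⦄, α ≤ w → w ≤ w' → w' < β → Disjoint F (Ioc w w') → g w' = g w

lemma IsStepOn.mem_iff {V : Set R} (hV : IsStepOn (· ∈ V) F α β) {w w' : R} (hw : α ≤ w)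
    (hle : w ≤ w') (hw' : w' < β) (hdisj : Disjoint F (Ioc w w')) : w' ∈ V ↔ w ∈ V :=
  iff_of_eq (hV hw hle hw' hdisj)

lemma isStepOn_mem_Ico (a b α β : R) : IsStepOn (· ∈ Ico a b) {a, b} α β := by
  intro w w' _ hle _ hdisj
  simp only [disjoint_insert_left, disjoint_singleton_left, mem_Ioc, not_and, not_le] at hdisj
  simp only [mem_Ico, eq_iff_iff]
  grind

lemma IsStepOn.map₂ {T' T'' : Type*} {g' : R → T'} {F' : Set R} (hg : IsStepOn g F α β)
    (hg' : IsStepOn g' F' α β) (op : T → T' → T'') :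
    IsStepOn (fun x => op (g x) (g' x)) (F ∪ F') α β := by
  intro w w' hw hle hw' hdisj
  rw [disjoint_union_left] at hdisj
  simp only [hg hw hle hw' hdisj.1, hg' hw hle hw' hdisj.2]

variable [TopologicalSpace R] [OrderTopology R]

lemma eventually_disjoint_Ioc_nhdsGT (hF : F.Finite) (z : R) :
    ∀ᶠ w in 𝓝[>] z, Disjoint F (Ioc z w) := by
  simp only [disjoint_left]
  refine hF.eventually_all.2 fun e _ => ?_
  rcases le_or_gt e z with hez | hze
  · exact .of_forall fun w he => he.1.not_ge hez
  · filter_upwards [Ioo_mem_nhdsGT hze] with w hw he using hw.2.not_ge he.2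

lemma eventually_disjoint_Ioc_nhdsLT (hF : F.Finite) {p : R} (hp : p ∉ F) :
    ∀ᶠ w in 𝓝[<] p, Disjoint F (Ioc w p) := by
  simp only [disjoint_left]
  refine hF.eventually_all.2 fun e he => ?_
  rcases lt_or_gt_of_ne (ne_of_mem_of_not_mem he hp) with hep | hpe
  · filter_upwards [Ioo_mem_nhdsLT hep] with w hw he' using hw.1.not_gt he'.1
  · exact .of_forall fun w he' => he'.2.not_gt hpe

/-- The points of `(α, β)` at which `g` is not locally constant from the left; for a step
function these are the breakpoints that cannot be dispensed with. -/
def leftJumps (g : R → T) (α β : R) : Set R :=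
  {p ∈ Ioo α β | ¬ ∀ᶠ w in 𝓝[<] p, g w = g p}

lemma IsStepOn.leftJumps_subset (hg : IsStepOn g F α β) (hF : F.Finite) :
    leftJumps g α β ⊆ F := by
  rintro p ⟨⟨hαp, hpβ⟩, hjump⟩
  by_contra hp
  apply hjump
  filter_upwards [eventually_disjoint_Ioc_nhdsLT hF hp, Ioo_mem_nhdsLT hαp] with w hdisj hw
  exact (hg hw.1.le hw.2.le hpβ hdisj).symm

lemma IsStepOn.eventually_nhdsGT (hg : IsStepOn g F α β) (hF : F.Finite) {p : R}
    (hp : p ∈ Ico α β) : ∀ᶠ w in 𝓝[>] p, g w = g p := by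
  filter_upwards [eventually_disjoint_Ioc_nhdsGT hF p, Ioo_mem_nhdsGT hp.2] with w hdisj hw
  exact hg hp.1 hw.1.le hw.2 hdisj

end StepFunction

lemma IsStepOn.isStepOn_leftJumps {R T : Type*} [ConditionallyCompleteLinearOrder R]
    [DenselyOrdered R] [TopologicalSpace R] [OrderTopology R] {g : R → T} {F : Set R} {α β : R}
    (hg : IsStepOn g F α β) (hF : F.Finite) : IsStepOn g (leftJumps g α β) α β := by
  intro w w' hw hle hw' hdisj
  refine isPreconnected_Icc.induction₂ (fun x y => g y = g x) (fun x hx => ?_)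
    (fun _ _ _ _ _ _ hxy hyz => hyz.trans hxy) (fun _ _ _ _ => Eq.symm)
    (left_mem_Icc.2 hle) (right_mem_Icc.2 hle)
  have hxX : x ∈ Ico α β := ⟨hw.trans hx.1, hx.2.trans_lt hw'⟩
  have left : ∀ᶠ y in 𝓝[<] x, y ∈ Icc w w' → g y = g x := by
    rcases hx.1.eq_or_lt with rfl | hwx
    · filter_upwards [self_mem_nhdsWithin] with y hy hyI using absurd hyI.1 (not_le.2 hy)
    · by_contra hjump
      refine disjoint_left.1 hdisj ⟨⟨hw.trans_lt hwx, hxX.2⟩, fun hconst => hjump ?_⟩ ⟨hwx, hx.2⟩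
      filter_upwards [hconst] with y hy _ using hy
  have right : ∀ᶠ y in 𝓝[>] x, y ∈ Icc w w' → g y = g x := by
    filter_upwards [hg.eventually_nhdsGT hF hxX] with y hy _ using hy
  rw [eventually_nhdsWithin_iff, ← nhdsNE_sup_pure, ← nhdsLT_sup_nhdsGT]
  exact eventually_sup.2 ⟨eventually_sup.2 ⟨left, right⟩, eventually_pure.2 fun _ => rfl⟩

section Dynamics

variable {X : Type*} {f : X → X} {s J : Set X}

/-- The orbit of `z` does not return to `J` at any of the times `1, …, n - 1`. -/
def NoReturnBefore (f : X → X) (J : Set X) (n : ℕ) (z : X) : Prop :=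
  ∀ j, 0 < j → j < n → f^[j] z ∉ J

lemma exists_noReturnBefore_of_exists_iterate_mem {z : X}
    (h : ∃ n, 0 < n ∧ f^[n] z ∈ J) : ∃ n, 0 < n ∧ f^[n] z ∈ J ∧ NoReturnBefore f J n z := by
  classical
  exact ⟨Nat.find h, (Nat.find_spec h).1, (Nat.find_spec h).2,
    fun _ hj hlt hmem => Nat.find_min h hlt ⟨hj, hmem⟩⟩

/-- The points of `J` whose orbit meets `E` no later than its first return to `J`. -/
def cutPoints (f : X → X) (J E : Set X) : Set X :=
  {z ∈ J | ∃ n, f^[n] z ∈ E ∧ NoReturnBefore f J n z}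

lemma eq_of_iterate_eq_of_noReturnBefore (hmaps : MapsTo f s s) (hinj : InjOn f s) (hJ : J ⊆ s)
    {z z' : X} {n m : ℕ} (hz : z ∈ J) (hz' : z' ∈ J) (hn : 0 < n) (hnm : n ≤ m)
    (heq : f^[n] z = f^[m] z') (hret : NoReturnBefore f J m z') : z = z' := by
  obtain ⟨k, rfl⟩ := Nat.exists_eq_add_of_le hnm
  rw [Function.iterate_add_apply] at heq
  have hzk : z = f^[k] z' := hinj.iterate hmaps n (hJ hz) (hmaps.iterate k (hJ hz')) heq
  rcases k.eq_zero_or_pos with rfl | hk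
  · exact hzk
  · exact absurd (hzk ▸ hz) (hret k hk (by omega))

lemma finite_cutPoints (hmaps : MapsTo f s s) (hinj : InjOn f s) (hJ : J ⊆ s) {E : Set X}
    (hE : E.Finite) : (cutPoints f J E).Finite := by
  let firstCut (e : X) : Set X := {z ∈ J | ∃ n, 0 < n ∧ f^[n] z = e ∧ NoReturnBefore f J n z}
  have hsub : cutPoints f J E ⊆ E ∪ ⋃ e ∈ E, firstCut e := by
    rintro z ⟨hz, n, hn, hret⟩
    rcases n.eq_zero_or_pos with rfl | hpos
    · exact Or.inl hn
    · exact Or.inr (mem_biUnion hn ⟨hz, n, hpos, rfl, hret⟩)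
  refine (hE.union (hE.biUnion fun e _ => Subsingleton.finite ?_)).subset hsub
  rintro z ⟨hz, n, hn, hne, hret⟩ z' ⟨hz', m, hm, hme, hret'⟩
  rcases le_total n m with hnm | hmn
  · exact eq_of_iterate_eq_of_noReturnBefore hmaps hinj hJ hz hz' hn hnm (hne.trans hme.symm)
      hret'
  · exact (eq_of_iterate_eq_of_noReturnBefore hmaps hinj hJ hz' hz hm hmn (hme.trans hne.symm)
      hret).symm

/-- The points whose orbit meets `J` at one of the times `0, …, N - 1`. -/
def hitsBefore (f : X → X) (J : Set X) (N : ℕ) : Set X :=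
  {x | ∃ k < N, f^[k] x ∈ J}

lemma mem_hitsBefore_succ {N : ℕ} {x : X} :
    x ∈ hitsBefore f J (N + 1) ↔ x ∈ J ∨ f x ∈ hitsBefore f J N := by
  simp only [hitsBefore, mem_ofPred_eq, Nat.exists_lt_succ_left, Function.iterate_zero, id_eq,
    Function.iterate_succ_apply]

lemma mapsTo_hitsBefore {N : ℕ} (hN : ∀ z ∈ J, ∃ n, 0 < n ∧ n ≤ N ∧ f^[n] z ∈ J) :
    MapsTo f (hitsBefore f J N) (hitsBefore f J N) := by
  rintro x ⟨k, hk, hx⟩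
  obtain ⟨n, hn, hnN, hxn⟩ : ∃ n, 0 < n ∧ n ≤ N ∧ f^[n] x ∈ J := by
    rcases k.eq_zero_or_pos with rfl | hpos
    · exact hN x hx
    · exact ⟨k, hpos, hk.le, hx⟩
  refine ⟨n - 1, by omega, ?_⟩
  rwa [← Function.iterate_succ_apply, Nat.succ_eq_add_one, Nat.sub_add_cancel hn]

end Dynamics

lemma exists_lt_dist_lt_of_totallyBounded {X : Type*} [PseudoMetricSpace X] {s : Set X}
    (hs : TotallyBounded s) {u : ℕ → X} (hu : ∀ n, u n ∈ s) {ε : ℝ} (hε : 0 < ε) :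
    ∃ n m, n < m ∧ dist (u n) (u m) < ε := by
  obtain ⟨t, ht, hst⟩ := Metric.totallyBounded_iff.1 hs (ε / 2) (half_pos hε)
  choose c hct hc using fun n => mem_iUnion₂.1 (hst (hu n))
  obtain ⟨n, m, hnm, heq⟩ := ht.exists_lt_map_eq_of_forall_mem hct
  refine ⟨n, m, hnm, ?_⟩
  have hn : dist (u n) (c n) < ε / 2 := hc n
  have hm : dist (u m) (c n) < ε / 2 := heq ▸ hc m
  linarith [dist_triangle_right (u n) (u m) (c n)]

lemma Ioc_subset_image_of_translate {φ : ℝ → ℝ} {w w' : ℝ}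
    (hφ : ∀ u ∈ Icc w w', φ u = φ w + (u - w)) (hle : w ≤ w') :
    Ioc (φ w) (φ w') ⊆ φ '' Ioc w w' := by
  rintro e ⟨hwe, hew'⟩
  rw [hφ w' (right_mem_Icc.2 hle)] at hew'
  refine ⟨w + (e - φ w), ⟨by linarith, by linarith⟩, ?_⟩
  rw [hφ _ ⟨by linarith, by linarith⟩]
  ring

section FiniteSet

variable {X : Type*} {f : X → X} {S : Set X}

lemma exists_iterate_mem_and_notMem (hS : S.Finite)
    (hper : ∀ x ∈ S, ∀ n, 0 < n → f^[n] x ≠ x) {p : X} (hp : p ∈ S) :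
    ∃ n, f^[n] p ∈ S ∧ f^[n + 1] p ∉ S := by
  by_contra! hstay
  have hmem (n : ℕ) : f^[n] p ∈ S := by
    induction n with
    | zero => exact hp
    | succ n ih => exact hstay n ih
  obtain ⟨n, m, hnm, heq⟩ := hS.exists_lt_map_eq_of_forall_mem hmem
  refine hper _ (hmem n) (m - n) (by omega) ?_
  rw [← Function.iterate_add_apply, Nat.sub_add_cancel hnm.le, heq]

lemma exists_iterate_eq_and_notMem_image (hS : S.Finite)
    (hper : ∀ x ∈ S, ∀ n, 0 < n → f^[n] x ≠ x) {p : X} (hp : p ∈ S) :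
    ∃ q ∈ S, q ∉ f '' S ∧ ∃ n, f^[n] q = p := by
  by_contra! hpred
  let T : Set X := {q ∈ S | ∃ n, f^[n] q = p}
  have hT : T.Finite := hS.subset fun _ hq => hq.1
  have hTf : T ⊆ f '' T := by
    rintro q ⟨hq, n, hn⟩
    obtain ⟨r, hr, rfl⟩ : q ∈ f '' S := by
      by_contra hqS
      exact hpred q hq hqS n hn
    exact ⟨r, ⟨hr, n + 1, hn⟩, rfl⟩
  have hfT : f '' T = T := (hT.eq_of_subset_of_encard_le hTf (encard_image_le f T)).symm
  obtain ⟨n, hin, hout⟩ := exists_iterate_mem_and_notMem hT (fun x hx => hper x hx.1) ⟨hp, 0, rfl⟩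
  rw [Function.iterate_succ_apply'] at hout
  exact hout (hfT ▸ mem_image_of_mem f hin)

end FiniteSet

lemma disjoint_Ioc_iterate_of_disjoint_cutPoints {f : ℝ → ℝ} {J E : Set ℝ} {z z' : ℝ} {n : ℕ}
    (hJ : Icc z z' ⊆ J) (hcut : Disjoint (cutPoints f J E) (Ioc z z'))
    (hcell : ∀ w ∈ Icc z z', f^[n] w = f^[n] z + (w - z) ∧ NoReturnBefore f J n w) {w : ℝ}
    (hw : w ∈ Icc z z') : Disjoint E (Ioc (f^[n] z) (f^[n] w)) := by
  refine disjoint_left.2 fun e heE he => ?_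
  obtain ⟨u, hu, rfl⟩ := Ioc_subset_image_of_translate
    (fun u hu => (hcell u ⟨hu.1, hu.2.trans hw.2⟩).1) hw.1 he
  have huz : u ∈ Ioc z z' := ⟨hu.1, hu.2.trans hw.2⟩
  have huI := Ioc_subset_Icc_self huz
  exact disjoint_left.1 hcut ⟨hJ huI, n, heE, (hcell u huI).2⟩ huz

/-- `f` is an interval exchange transformation of `[α, β)`. The finite set `D` contains the left
endpoints of the exchanged intervals, and `f` is a translation between consecutive points of
`D`. -/
structure IsIntervalExchange (f : ℝ → ℝ) (D : Set ℝ) (α β : ℝ) : Prop where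
  bijOn : BijOn f (Ico α β) (Ico α β)
  finite : D.Finite
  left_mem : α ∈ D
  translate : IsStepOn (fun x => f x - x) D α β

/-- The points lying on a connection, that is, on an orbit segment of positive length which
starts and ends in `D`; the starting point is not counted. -/
def connectionPoints {X : Type*} (f : X → X) (D : Set X) : Set X :=
  {p | (∃ d ∈ D, ∃ m, f^[m + 1] d = p) ∧ ∃ n, f^[n] p ∈ D}

namespace IsIntervalExchange

variable {f : ℝ → ℝ} {D F : Set ℝ} {α β a b : ℝ}

lemma apply_eq (hf : IsIntervalExchange f D α β) {w w' : ℝ} (hw : α ≤ w) (hle : w ≤ w')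
    (hw' : w' < β) (hdisj : Disjoint D (Ioc w w')) : f w' = f w + (w' - w) := by
  have : f w' - w' = f w - w := hf.translate hw hle hw' hdisj
  linarith

section Step

variable {T : Type*} {g : ℝ → T}

lemma isStepOn_comp (hf : IsIntervalExchange f D α β) (hg : IsStepOn g F α β) :
    IsStepOn (fun x => g (f x)) (D ∪ Ico α β ∩ f ⁻¹' F) α β := by
  intro w w' hw hle hw' hdisj
  rw [disjoint_union_left] at hdisj
  have htrans (u : ℝ) (hu : u ∈ Icc w w') : f u = f w + (u - w) :=
    hf.apply_eq hw hu.1 (hu.2.trans_lt hw') (hdisj.1.mono_right (Ioc_subset_Ioc_right hu.2))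
  have hfw : f w ∈ Ico α β := hf.bijOn.mapsTo ⟨hw, hle.trans_lt hw'⟩
  have hfw' : f w' ∈ Ico α β := hf.bijOn.mapsTo ⟨hw.trans hle, hw'⟩
  have hfle : f w ≤ f w' := by linarith [htrans w' (right_mem_Icc.2 hle)]
  refine hg hfw.1 hfle hfw'.2 (disjoint_left.2 fun e heF he => ?_)
  obtain ⟨u, hu, rfl⟩ := Ioc_subset_image_of_translate htrans hle he
  exact disjoint_left.1 hdisj.2 ⟨⟨hw.trans hu.1.le, hu.2.trans_lt hw'⟩, heF⟩ hu

lemma exists_finite_isStepOn_hitsBefore (hf : IsIntervalExchange f D α β) (a b : ℝ) (N : ℕ) :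
    ∃ F : Set ℝ, F.Finite ∧ IsStepOn (· ∈ hitsBefore f (Ico a b) N) F α β := by
  induction N with
  | zero => exact ⟨∅, finite_empty, fun _ _ _ _ _ _ => by simp [hitsBefore]⟩
  | succ N ih =>
    obtain ⟨F, hF, hstep⟩ := ih
    have hpre : (Ico α β ∩ f ⁻¹' F).Finite :=
      .of_finite_image (hF.subset (image_subset_iff.2 inter_subset_right))
        (hf.bijOn.injOn.mono inter_subset_left)
    refine ⟨{a, b} ∪ (D ∪ Ico α β ∩ f ⁻¹' F), (toFinite _).union (hf.finite.union hpre), ?_⟩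
    simpa only [mem_hitsBefore_succ] using
      (isStepOn_mem_Ico a b α β).map₂ (hf.isStepOn_comp hstep) Or

end Step

section Return

variable {z z' : ℝ}

lemma finite_cutPoints_Ico (hf : IsIntervalExchange f D α β) (hJ : Ico a b ⊆ Ico α β) :
    (cutPoints f (Ico a b) (D ∪ {a, b})).Finite :=
  finite_cutPoints hf.bijOn.mapsTo hf.bijOn.injOn hJ (hf.finite.union (toFinite _))

lemma iterate_eq_and_noReturnBefore (hf : IsIntervalExchange f D α β) (hJ : Ico a b ⊆ Ico α β)
    (hzz' : Icc z z' ⊆ Ico a b) (hcut : Disjoint (cutPoints f (Ico a b) (D ∪ {a, b})) (Ioc z z'))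
    {n : ℕ} (hret : NoReturnBefore f (Ico a b) n z) :
    ∀ w ∈ Icc z z', f^[n] w = f^[n] z + (w - z) ∧ NoReturnBefore f (Ico a b) n w := by
  induction n with
  | zero => exact fun w _ => ⟨by simp, fun j _ hj => absurd hj j.not_lt_zero⟩
  | succ n ih =>
    intro w hw
    have hcell := ih fun j hj hjn => hret j hj (by omega)
    obtain ⟨htrans, hretw⟩ := hcell w hw
    have hdisj := disjoint_Ioc_iterate_of_disjoint_cutPoints hzz' hcut hcell hw
    rw [disjoint_union_left] at hdisj
    have hle : f^[n] z ≤ f^[n] w := by linarith [hw.1]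
    have hX {u : ℝ} (hu : u ∈ Icc z z') : f^[n] u ∈ Ico α β :=
      hf.bijOn.mapsTo.iterate n (hJ (hzz' hu))
    have hz := hX (left_mem_Icc.2 (hw.1.trans hw.2))
    refine ⟨?_, fun j hj hjn => ?_⟩
    · rw [Function.iterate_succ_apply', Function.iterate_succ_apply',
        hf.apply_eq hz.1 hle (hX hw).2 hdisj.1, htrans]
      ring
    · rcases Nat.lt_succ_iff_lt_or_eq.1 hjn with hlt | rfl
      · exact hretw j hj hlt
      · rw [(isStepOn_mem_Ico a b α β).mem_iff hz.1 hle (hX hw).2 hdisj.2]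
        exact hret j hj j.lt_succ_self

lemma iterate_mem_Ico (hf : IsIntervalExchange f D α β) (hJ : Ico a b ⊆ Ico α β)
    (hzz' : Icc z z' ⊆ Ico a b) (hcut : Disjoint (cutPoints f (Ico a b) (D ∪ {a, b})) (Ioc z z'))
    {n : ℕ} (hret : NoReturnBefore f (Ico a b) n z) (hn : f^[n] z ∈ Ico a b) :
    ∀ w ∈ Icc z z', f^[n] w ∈ Ico a b := by
  intro w hw
  by_contra hwn
  have hcell := hf.iterate_eq_and_noReturnBefore hJ hzz' hcut hret
  have hdisj := disjoint_Ioc_iterate_of_disjoint_cutPoints hzz' hcut hcell hw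
  have hle : f^[n] z ≤ f^[n] w := by linarith [(hcell w hw).1, hw.1]
  have hwX : f^[n] w ∈ Ico α β := hf.bijOn.mapsTo.iterate n (hJ (hzz' hw))
  exact hwn (((isStepOn_mem_Ico a b α β).mem_iff (hJ hn).1 hle hwX.2
    (hdisj.mono_left subset_union_right)).2 hn)

/-- If `z` never returned, a whole interval `[z, z']` would be translated by all iterates without
ever returning; as `[α, β)` is bounded, two of its images overlap. -/
lemma exists_pos_iterate_mem_Ico (hf : IsIntervalExchange f D α β) (hJ : Ico a b ⊆ Ico α β)
    (hz : z ∈ Ico a b) : ∃ n, 0 < n ∧ f^[n] z ∈ Ico a b := by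
  by_contra! hno
  obtain ⟨z', hcut, hzz', hz'b⟩ :=
    ((eventually_disjoint_Ioc_nhdsGT (hf.finite_cutPoints_Ico hJ) z).and
      (Ioo_mem_nhdsGT hz.2)).exists
  have hI : Icc z z' ⊆ Ico a b := Icc_subset_Ico hz.1 hz'b
  have hcell (n : ℕ) := hf.iterate_eq_and_noReturnBefore (n := n) hJ hI hcut fun j hj _ => hno j hj
  have hX {u : ℝ} (hu : u ∈ Icc z z') (n : ℕ) : f^[n] u ∈ Ico α β :=
    hf.bijOn.mapsTo.iterate n (hJ (hI hu))
  have hne {u v : ℝ} (hu : u ∈ Icc z z') (hv : v ∈ Icc z z') (n : ℕ) {k : ℕ} (hk : 0 < k) :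
      f^[n + k] u ≠ f^[n] v := by
    rw [Function.iterate_add_apply]
    intro heq
    have huv : f^[k] u = v :=
      hf.bijOn.injOn.iterate hf.bijOn.mapsTo n (hX hu k) (hJ (hI hv)) heq
    exact (hcell (k + 1) u hu).2 k hk k.lt_succ_self (huv ▸ hI hv)
  have hzI : z ∈ Icc z z' := left_mem_Icc.2 hzz'.le
  obtain ⟨n, m, hnm, hdist⟩ := exists_lt_dist_lt_of_totallyBounded (totallyBounded_Ico α β)
    (hX hzI) (sub_pos.2 hzz')
  obtain ⟨k, hk, rfl⟩ : ∃ k, 0 < k ∧ n + k = m := ⟨m - n, by omega, by omega⟩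
  rw [Real.dist_eq, abs_lt] at hdist
  rcases le_total (f^[n] z) (f^[n + k] z) with hle | hle
  · have hw : z + (f^[n + k] z - f^[n] z) ∈ Icc z z' := ⟨by linarith, by linarith⟩
    exact hne hzI hw n hk (by rw [(hcell n _ hw).1]; ring)
  · have hw : z + (f^[n] z - f^[n + k] z) ∈ Icc z z' := ⟨by linarith, by linarith⟩
    exact hne hw hzI n hk (by rw [(hcell (n + k) _ hw).1]; ring)

lemma exists_forall_return_le (hf : IsIntervalExchange f D α β) (hJ : Ico a b ⊆ Ico α β) :
    ∃ N, ∀ z ∈ Ico a b, ∃ n, 0 < n ∧ n ≤ N ∧ f^[n] z ∈ Ico a b := by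
  set C := cutPoints f (Ico a b) (D ∪ {a, b})
  have hC : C.Finite := hf.finite_cutPoints_Ico hJ
  choose! τ hτpos hτmem hτret using fun c (hc : c ∈ C) =>
    exists_noReturnBefore_of_exists_iterate_mem (hf.exists_pos_iterate_mem_Ico hJ hc.1)
  obtain ⟨N, hN⟩ := (hC.image τ).bddAbove
  refine ⟨N, fun z hz => ?_⟩
  have haC : a ∈ C :=
    ⟨left_mem_Ico.2 (hz.1.trans_lt hz.2), 0, by simp, fun j _ hj => absurd hj j.not_lt_zero⟩
  obtain ⟨c, ⟨hcC, hcz⟩, hmax⟩ :=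
    exists_max_image (C ∩ Iic z) id (hC.subset inter_subset_left) ⟨a, haC, hz.1⟩
  have hcut : Disjoint C (Ioc c z) :=
    disjoint_left.2 fun e heC he => he.1.not_ge (hmax e ⟨heC, he.2⟩)
  exact ⟨τ c, hτpos c hcC, hN (mem_image_of_mem τ hcC), hf.iterate_mem_Ico hJ
    (Icc_subset_Ico hcC.1.1 hz.2) hcut (hτret c hcC) (hτmem c hcC) z (right_mem_Icc.2 hcz)⟩

lemma apply_mem_iff_of_mapsTo (hf : IsIntervalExchange f D α β) {V : Set ℝ} (hF : F.Finite)
    (hstep : IsStepOn (· ∈ V) F α β) (hV : MapsTo f V V) {x : ℝ} (hx : x ∈ Ico α β) :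
    f x ∈ V ↔ x ∈ V := by
  refine ⟨fun hfx => ?_, fun h => hV h⟩
  obtain ⟨x', hdisj, hxx', hx'β⟩ :=
    ((eventually_disjoint_Ioc_nhdsGT hF x).and (Ioo_mem_nhdsGT hx.2)).exists
  obtain ⟨n, hn, hmem⟩ := hf.exists_pos_iterate_mem_Ico (Ico_subset_Ico hx.1 hx'β.le)
    (left_mem_Ico.2 hxx')
  have hnV : f^[n] x ∈ V := by
    obtain ⟨k, rfl⟩ := Nat.exists_eq_add_one_of_ne_zero hn.ne'
    exact hV.iterate k hfx
  exact (hstep.mem_iff hx.1 hmem.1 (hmem.2.trans hx'β)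
    (hdisj.mono_right (Ioc_subset_Ioc_right hmem.2.le))).1 hnV

end Return

section Connection

variable {T : Type*} {g : ℝ → T} {p : ℝ}

lemma eventually_nhdsLT_apply_eq (hf : IsIntervalExchange f D α β) (hp : p ∈ Ico α β)
    (hpD : p ∉ D) : ∀ᶠ w in 𝓝[<] p, w ∈ Ioo α p ∧ f w = w + (f p - p) := by
  have hαp : α < p := hp.1.lt_of_ne (ne_of_mem_of_not_mem hf.left_mem hpD)
  filter_upwards [eventually_disjoint_Ioc_nhdsLT hf.finite hpD, Ioo_mem_nhdsLT hαp]
    with w hdisj hw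
  exact ⟨hw, by linarith [hf.apply_eq hw.1.le hw.2.le hp.2 hdisj]⟩

lemma map_nhdsLT (hf : IsIntervalExchange f D α β) (hp : p ∈ Ico α β) (hpD : p ∉ D) :
    map f (𝓝[<] p) = 𝓝[<] (f p) := by
  rw [map_congr ((hf.eventually_nhdsLT_apply_eq hp hpD).mono fun _ => And.right),
    map_add_right_nhdsLT, add_sub_cancel]

lemma apply_mem_leftJumps_iff (hf : IsIntervalExchange f D α β)
    (hinv : ∀ x ∈ Ico α β, g (f x) = g x) (hp : p ∈ Ico α β) (hpD : p ∉ D) :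
    f p ∈ leftJumps g α β ↔ p ∈ leftJumps g α β := by
  have hleft := hf.eventually_nhdsLT_apply_eq hp hpD
  obtain ⟨w, hw, hfw⟩ := hleft.exists
  have hwX := hf.bijOn.mapsTo ⟨hw.1.le, hw.2.trans hp.2⟩
  have hfpX := hf.bijOn.mapsTo hp
  have hpIoo : p ∈ Ioo α β := ⟨hw.1.trans hw.2, hp.2⟩
  have hfpIoo : f p ∈ Ioo α β := ⟨by linarith [hw.2, hwX.1], hfpX.2⟩
  have hcongr : (∀ᶠ u in 𝓝[<] p, g (f u) = g (f p)) ↔ ∀ᶠ u in 𝓝[<] p, g u = g p := by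
    refine eventually_congr (hleft.mono fun u hu => ?_)
    rw [hinv u ⟨hu.1.1.le, hu.1.2.trans hp.2⟩, hinv p hp]
  rw [leftJumps, mem_sep_iff, mem_sep_iff, ← hf.map_nhdsLT hp hpD, eventually_map, hcongr]
  exact and_congr_left fun _ => iff_of_true hfpIoo hpIoo

lemma leftJumps_subset_connectionPoints (hf : IsIntervalExchange f D α β)
    (hper : ∀ x ∈ Ico α β, ∀ n, 0 < n → f^[n] x ≠ x) (hinv : ∀ x ∈ Ico α β, g (f x) = g x)
    (hfin : (leftJumps g α β).Finite) : leftJumps g α β ⊆ connectionPoints f D := by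
  intro p hp
  have hX {x : ℝ} (hx : x ∈ leftJumps g α β) : x ∈ Ico α β := Ioo_subset_Ico_self hx.1
  constructor
  · obtain ⟨q, hq, hqf, n, hn⟩ :=
      exists_iterate_eq_and_notMem_image hfin (fun x hx => hper x (hX hx)) hp
    obtain ⟨d, hd, rfl⟩ := hf.bijOn.surjOn (hX hq)
    refine ⟨d, ?_, n, hn⟩
    by_contra hdD
    exact hqf (mem_image_of_mem f ((hf.apply_mem_leftJumps_iff hinv hd hdD).1 hq))
  · obtain ⟨n, hin, hout⟩ :=
      exists_iterate_mem_and_notMem hfin (fun x hx => hper x (hX hx)) hp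
    refine ⟨n, ?_⟩
    by_contra hnD
    rw [Function.iterate_succ_apply'] at hout
    exact hout ((hf.apply_mem_leftJumps_iff hinv (hX hin) hnD).2 hin)

/-- Keane's criterion with connections through one point `c` allowed: a set whose membership is
preserved by `f` is then a union of `[α, c)` and `[c, β)`, and the step from `x₀` to `f x₀`
glues these two intervals. -/
theorem exists_iterate_mem_Ico (hf : IsIntervalExchange f D α β)
    (hper : ∀ x ∈ Ico α β, ∀ n, 0 < n → f^[n] x ≠ x) {c x₀ : ℝ}
    (hconn : connectionPoints f D ⊆ {α, c}) (hx₀ : x₀ ∈ Ico α c) (hfx₀ : f x₀ ∈ Ico c β)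
    (hαa : α ≤ a) (hab : a < b) (hbβ : b ≤ β) {x : ℝ} (hx : x ∈ Ico α β) :
    ∃ n, f^[n] x ∈ Ico a b := by
  have hJ : Ico a b ⊆ Ico α β := Ico_subset_Ico hαa hbβ
  obtain ⟨N, hN⟩ := hf.exists_forall_return_le hJ
  obtain ⟨F, hF, hstep⟩ := hf.exists_finite_isStepOn_hitsBefore a b (N + 1)
  set V := hitsBefore f (Ico a b) (N + 1)
  have hV : MapsTo f V V := mapsTo_hitsBefore fun z hz =>
    (hN z hz).imp fun n hn => ⟨hn.1, hn.2.1.trans N.le_succ, hn.2.2⟩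
  have hinv (y : ℝ) (hy : y ∈ Ico α β) : (f y ∈ V) = (y ∈ V) :=
    propext (hf.apply_mem_iff_of_mapsTo hF hstep hV hy)
  have hjumps : leftJumps (· ∈ V) α β ⊆ {c} := fun p hp =>
    (hconn (hf.leftJumps_subset_connectionPoints hper hinv
      (hF.subset (hstep.leftJumps_subset hF)) hp)).resolve_left hp.1.1.ne'
  have hconst {u v : ℝ} (hu : α ≤ u) (huv : u ≤ v) (hv : v < β) (hc : c ∉ Ioc u v) :
      v ∈ V ↔ u ∈ V :=
    (hstep.isStepOn_leftJumps hF).mem_iff hu huv hv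
      ((disjoint_singleton_left.2 hc).mono_left hjumps)
  have hcX : c ∈ Ico α β := ⟨hx₀.1.trans hx₀.2.le, hfx₀.1.trans_lt hfx₀.2⟩
  have hx₀β : x₀ < β := hx₀.2.trans hcX.2
  have hαc : c ∈ V ↔ α ∈ V := by
    rw [← hconst hcX.1 hfx₀.1 hfx₀.2 fun h => lt_irrefl _ h.1, hinv x₀ ⟨hx₀.1, hx₀β⟩,
      hconst le_rfl hx₀.1 hx₀β fun h => hx₀.2.not_ge h.2]
  have hall {y : ℝ} (hy : y ∈ Ico α β) : y ∈ V ↔ α ∈ V := by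
    rcases lt_or_ge y c with hyc | hcy
    · exact hconst le_rfl hy.1 hy.2 fun h => hyc.not_ge h.2
    · rw [hconst hcX.1 hcy hy.2 fun h => lt_irrefl _ h.1, hαc]
  have haV : a ∈ V := ⟨0, N.succ_pos, left_mem_Ico.2 hab⟩
  obtain ⟨n, -, hn⟩ : x ∈ V := by rwa [hall hx, ← hall (hJ (left_mem_Ico.2 hab))]
  exact ⟨n, hn⟩

end Connection

end IsIntervalExchange

section Billiard

variable {r1 r2 : ℝ}

/-- The left endpoints of the eight intervals exchanged by `fIET r1 r2`. -/
def breakpoints (r1 r2 : ℝ) : Set ℝ :=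
  {-1, r1 - r2 - 1, r1 - r2 - 1 / 2, -r1, 0, r1 - r2, r1 - r2 + 1 / 2, 1 - r1}

/-- The inverse of `fIET r1 r2`. -/
noncomputable def fIETInv (r1 r2 : ℝ) (η : ℝ) : ℝ :=
  if η < r1 - 1 then η - r1 + 1
  else if η < r1 - 1 / 2 then η - r2
  else if η < 2 * r1 - r2 - 1 / 2 then η - r1 + 1 / 2
  else if η < 0 then η - r1
  else if η < r1 then η - r1 + 1
  else if η < r1 + 1 / 2 then η - r2
  else if η < 2 * r1 - r2 + 1 / 2 then η - r1 - 3 / 2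
  else η - r1

lemma bijOn_fIET (h0 : 0 < r2) (hlt : r2 < r1) (hgap : 0 < 1 / 4 + r2 / 2 - r1) :
    BijOn (fIET r1 r2) (Ico (-1) 1) (Ico (-1) 1) := by
  refine InvOn.bijOn (f' := fIETInv r1 r2) ⟨?_, ?_⟩ ?_ ?_ <;> rintro x ⟨h1, h2⟩
  · grind (splits := 15) [fIET, fIETInv]
  · grind (splits := 15) [fIET, fIETInv]
  · grind [fIET]
  · grind [fIETInv]

lemma isIntervalExchange_fIET (h0 : 0 < r2) (hlt : r2 < r1) (hgap : 0 < 1 / 4 + r2 / 2 - r1) :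
    IsIntervalExchange (fIET r1 r2) (breakpoints r1 r2) (-1) 1 where
  bijOn := bijOn_fIET h0 hlt hgap
  finite := by simp only [breakpoints, toFinite]
  left_mem := mem_insert _ _
  translate := by
    intro w w' _ hle _ hdisj
    have hside (d : ℝ) (hd : d ∈ breakpoints r1 r2) : w' < d ↔ w < d :=
      ⟨hle.trans_lt, fun hwd => not_le.1 fun hdw' => disjoint_left.1 hdisj hd ⟨hwd, hdw'⟩⟩
    simp only [breakpoints, mem_insert_iff, mem_singleton_iff, forall_eq_or_imp, forall_eq]
      at hside
    simp only [fIET, hside]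
    split_ifs <;> ring

/-- The two intervals on which `fIET r1 r2` is the translation by `r2`. -/
def slowRegion (r1 r2 : ℝ) : Set ℝ :=
  Ico (r1 - r2 - 1) (r1 - r2 - 1 / 2) ∪ Ico (r1 - r2) (r1 - r2 + 1 / 2)

/-- The displacement from `x` to `y` is `a * r1 + b * r2` modulo `1 / 2`. -/
def HasDisplacement (r1 r2 : ℝ) (a b : ℤ) (x y : ℝ) : Prop :=
  ∃ k : ℤ, y = x + a * r1 + b * r2 + k / 2

lemma HasDisplacement.trans {a b a' b' : ℤ} {x y z : ℝ} (hxy : HasDisplacement r1 r2 a b x y)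
    (hyz : HasDisplacement r1 r2 a' b' y z) : HasDisplacement r1 r2 (a + a') (b + b') x z := by
  obtain ⟨k, rfl⟩ := hxy
  obtain ⟨l, rfl⟩ := hyz
  exact ⟨k + l, by push_cast; ring⟩

lemma HasDisplacement.symm {a b : ℤ} {x y : ℝ} (hxy : HasDisplacement r1 r2 a b x y) :
    HasDisplacement r1 r2 (-a) (-b) y x := by
  obtain ⟨k, rfl⟩ := hxy
  exact ⟨-k, by push_cast; ring⟩

lemma fIET_of_mem_slowRegion (h0 : 0 < r2) (hlt : r2 < r1) {x : ℝ} (hx : x ∈ slowRegion r1 r2) :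
    fIET r1 r2 x = x + r2 := by
  rcases hx with ⟨h1, h2⟩ | ⟨h1, h2⟩ <;> grind [fIET]

lemma hasDisplacement_of_mem_slowRegion (h0 : 0 < r2) (hlt : r2 < r1) {x : ℝ}
    (hx : x ∈ slowRegion r1 r2) :
    HasDisplacement r1 r2 0 1 x (fIET r1 r2 x) :=
  ⟨0, by rw [fIET_of_mem_slowRegion h0 hlt hx]; push_cast; ring⟩

lemma hasDisplacement_of_notMem_slowRegion {x : ℝ} (hx : x ∉ slowRegion r1 r2) :
    HasDisplacement r1 r2 1 0 x (fIET r1 r2 x) := by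
  obtain ⟨k, hk⟩ : ∃ k : ℤ, fIET r1 r2 x = x + r1 + k / 2 := by
    simp only [slowRegion, mem_union, mem_Ico, not_or, not_and, not_lt] at hx
    unfold fIET
    split_ifs
    · exact ⟨3, by norm_num⟩
    · linarith [hx.1 (by linarith)]
    · exact ⟨0, by norm_num⟩
    · exact ⟨-2, by norm_num; ring⟩
    · exact ⟨-1, by norm_num; ring⟩
    · linarith [hx.2 (by linarith)]
    · exact ⟨0, by norm_num⟩
    · exact ⟨-2, by norm_num; ring⟩
  exact ⟨k, by rw [hk]; push_cast; ring⟩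

lemma exists_iterate_notMem_slowRegion (hr2 : 1 / 4 ≤ r2) (hlt : r2 < r1)
    (hgap : 0 < 1 / 4 + r2 / 2 - r1) (x : ℝ) :
    ∃ i < 3, (fIET r1 r2)^[i] x ∉ slowRegion r1 r2 := by
  by_contra! hslow
  have h0 := hslow 0 (by norm_num)
  have h1 := hslow 1 (by norm_num)
  have h2 := hslow 2 (by norm_num)
  have hstep {y : ℝ} := fIET_of_mem_slowRegion (x := y) (by linarith) hlt
  simp only [Function.iterate_succ_apply, Function.iterate_zero, id_eq] at h0 h1 h2
  rw [hstep h0] at h1 h2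
  rw [hstep h1] at h2
  rcases h0 with h0 | h0 <;> rcases h1 with h1 | h1 <;> rcases h2 with h2 | h2 <;>
    linarith [h0.1, h0.2, h1.1, h1.2, h2.1, h2.2]

lemma exists_hasDisplacement_iterate (h0 : 0 < r2) (hlt : r2 < r1) (n : ℕ) (x : ℝ) :
    ∃ a b : ℤ, 0 ≤ a ∧ 0 ≤ b ∧ a + b = n ∧
      HasDisplacement r1 r2 a b x ((fIET r1 r2)^[n] x) := by
  induction n with
  | zero => exact ⟨0, 0, le_rfl, le_rfl, rfl, 0, by simp⟩
  | succ n ih =>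
    obtain ⟨a, b, ha, hb, hab, hdisp⟩ := ih
    rw [Function.iterate_succ_apply']
    by_cases hslow : (fIET r1 r2)^[n] x ∈ slowRegion r1 r2
    · exact ⟨a + 0, b + 1, by omega, by omega, by push_cast; omega,
        hdisp.trans (hasDisplacement_of_mem_slowRegion h0 hlt hslow)⟩
    · exact ⟨a + 1, b + 0, by omega, by omega, by push_cast; omega,
        hdisp.trans (hasDisplacement_of_notMem_slowRegion hslow)⟩

lemma exists_hasDisplacement_iterate_three (hr2 : 1 / 4 ≤ r2) (hlt : r2 < r1)
    (hgap : 0 < 1 / 4 + r2 / 2 - r1) (x : ℝ) :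
    ∃ a b : ℤ, 1 ≤ a ∧ 0 ≤ b ∧ a + b = 3 ∧
      HasDisplacement r1 r2 a b x ((fIET r1 r2)^[3] x) := by
  have hsteps := exists_hasDisplacement_iterate (by linarith) hlt
  obtain ⟨i, hi, hfast⟩ := exists_iterate_notMem_slowRegion hr2 hlt hgap x
  obtain ⟨a, b, ha, hb, hab, hbefore⟩ := hsteps i x
  obtain ⟨a', b', ha', hb', hab', hafter⟩ := hsteps (2 - i) ((fIET r1 r2)^[i + 1] x)
  rw [← Function.iterate_add_apply, show 2 - i + (i + 1) = 3 by omega,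
    Function.iterate_succ_apply'] at hafter
  exact ⟨a + 1 + a', b + 0 + b', by omega, by omega, by omega,
    (hbefore.trans (hasDisplacement_of_notMem_slowRegion hfast)).trans hafter⟩

lemma exists_hasDisplacement_iterate_le (hr2 : 1 / 4 ≤ r2) (hlt : r2 < r1)
    (hgap : 0 < 1 / 4 + r2 / 2 - r1) (n : ℕ) (x : ℝ) :
    ∃ a b : ℤ, 0 ≤ a ∧ 0 ≤ b ∧ a + b = n ∧ b ≤ 2 * a + 2 ∧
      HasDisplacement r1 r2 a b x ((fIET r1 r2)^[n] x) := by
  induction n using Nat.strong_induction_on generalizing x with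
  | _ n ih =>
    rcases lt_or_ge n 3 with hn | hn
    · obtain ⟨a, b, ha, hb, hab, hdisp⟩ :=
        exists_hasDisplacement_iterate (by linarith) hlt n x
      exact ⟨a, b, ha, hb, hab, by omega, hdisp⟩
    · obtain ⟨a, b, ha, hb, hab, hdisp⟩ := exists_hasDisplacement_iterate_three hr2 hlt hgap x
      obtain ⟨a', b', ha', hb', hab', hle, hdisp'⟩ := ih (n - 3) (by omega) ((fIET r1 r2)^[3] x)
      rw [← Function.iterate_add_apply, Nat.sub_add_cancel hn] at hdisp'
      exact ⟨a + a', b + b', by omega, by omega, by omega, by omega, hdisp.trans hdisp'⟩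

lemma hasDisplacement_breakpoint {d : ℝ} (hd : d ∈ breakpoints r1 r2) :
    (d ∈ ({-1, 0} : Set ℝ) ∧ HasDisplacement r1 r2 0 0 0 d) ∨
      HasDisplacement r1 r2 1 (-1) 0 d ∨ HasDisplacement r1 r2 (-1) 0 0 d := by
  rcases hd with rfl | rfl | rfl | rfl | rfl | rfl | rfl | rfl
  · exact .inl ⟨.inl rfl, -2, by norm_num⟩
  · exact .inr (.inl ⟨-2, by norm_num; ring⟩)
  · exact .inr (.inl ⟨-1, by norm_num; ring⟩)
  · exact .inr (.inr ⟨0, by norm_num⟩)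
  · exact .inl ⟨.inr rfl, 0, by norm_num⟩
  · exact .inr (.inl ⟨0, by norm_num; ring⟩)
  · exact .inr (.inl ⟨1, by norm_num; ring⟩)
  · exact .inr (.inr ⟨2, by norm_num; ring⟩)

section Relation

variable {m : ℤ}

lemma HasDisplacement.eq_mul (hrel : ∀ a b k : ℤ, a * r1 + b * r2 = k / 2 → b = m * a)
    {a b : ℤ} {x : ℝ} (h : HasDisplacement r1 r2 a b x x) : b = m * a := by
  obtain ⟨k, hk⟩ := h
  exact hrel a b (-k) (by push_cast; linarith)

lemma fIET_iterate_ne_self (hr2 : 1 / 4 ≤ r2) (hlt : r2 < r1)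
    (hgap : 0 < 1 / 4 + r2 / 2 - r1) (hm : 5 ≤ m)
    (hrel : ∀ a b k : ℤ, a * r1 + b * r2 = k / 2 → b = m * a) {n : ℕ} (hn : 0 < n) (x : ℝ) :
    (fIET r1 r2)^[n] x ≠ x := by
  intro hx
  obtain ⟨a, b, ha, -, hab, hle, hdisp⟩ := exists_hasDisplacement_iterate_le hr2 hlt hgap n x
  rw [hx] at hdisp
  have hb : b = m * a := hdisp.eq_mul hrel
  have ha0 : a = 0 := by nlinarith
  rw [ha0, mul_zero] at hb
  omega

lemma eq_zero_of_mul_le {c : ℤ} (hm : 10 ≤ m) (hlow : -1 ≤ m * c) (hle : m * c ≤ 2 * c + 7) :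
    c = 0 := by
  nlinarith

lemma eq_one_of_iterate_breakpoint_eq (hr2 : 1 / 4 ≤ r2) (hlt : r2 < r1)
    (hgap : 0 < 1 / 4 + r2 / 2 - r1) (hm : 10 ≤ m)
    (hrel : ∀ a b k : ℤ, a * r1 + b * r2 = k / 2 → b = m * a) {d d' : ℝ}
    (hd : d ∈ breakpoints r1 r2) (hd' : d' ∈ breakpoints r1 r2) {n : ℕ} (hn : 0 < n)
    (heq : (fIET r1 r2)^[n] d = d') : n = 1 ∧ d' ∈ ({-1, 0} : Set ℝ) := by
  obtain ⟨a, b, ha, hb, hab, hle, hdisp⟩ := exists_hasDisplacement_iterate_le hr2 hlt hgap n d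
  rw [heq] at hdisp
  have hloop {i j i' j' : ℤ} (hi : HasDisplacement r1 r2 i j 0 d)
      (hi' : HasDisplacement r1 r2 i' j' 0 d') : j + b + -j' = m * (i + a + -i') :=
    ((hi.trans hdisp).trans hi'.symm).eq_mul hrel
  have hzero {i j i' j' : ℤ} (hi : HasDisplacement r1 r2 i j 0 d)
      (hi' : HasDisplacement r1 r2 i' j' 0 d') (hj : -1 ≤ j - j')
      (hij : j - 2 * i ≤ j' - 2 * i' + 5) : i + a = i' ∧ j + b = j' := by
    have hl := hloop hi hi'
    have hc := eq_zero_of_mul_le (c := i + a + -i') hm (by omega) (by omega)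
    rw [hc, mul_zero] at hl
    omega
  rcases hasDisplacement_breakpoint hd with ⟨-, hi⟩ | hi | hi <;>
    rcases hasDisplacement_breakpoint hd' with ⟨h, hi'⟩ | hi' | hi' <;>
    obtain ⟨hia, hjb⟩ := hzero hi hi' (by omega) (by omega)
  all_goals first | exact ⟨by omega, h⟩ | omega

lemma connectionPoints_fIET_subset (hr2 : 1 / 4 ≤ r2) (hlt : r2 < r1)
    (hgap : 0 < 1 / 4 + r2 / 2 - r1) (hm : 10 ≤ m)
    (hrel : ∀ a b k : ℤ, a * r1 + b * r2 = k / 2 → b = m * a) :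
    connectionPoints (fIET r1 r2) (breakpoints r1 r2) ⊆ {-1, 0} := by
  rintro p ⟨⟨d, hd, k, rfl⟩, n, hn⟩
  rw [← Function.iterate_add_apply] at hn
  obtain ⟨hlen, hend⟩ :=
    eq_one_of_iterate_breakpoint_eq hr2 hlt hgap hm hrel hd hn (by omega) rfl
  obtain rfl : n = 0 := by omega
  rwa [zero_add] at hend

end Relation

end Billiard

lemma eq_ten_mul_of_relation {a b k : ℤ}
    (h : a * (5 / 11 + 1 / (22 * π)) + b * (5 / 11 - 1 / (220 * π)) = k / 2) : b = 10 * a := by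
  have hπ : (10 * a - b : ℤ) = π * (110 * k - 100 * (a + b) : ℤ) := by
    have := Real.pi_ne_zero
    field_simp at h
    push_cast
    linarith
  rcases eq_or_ne (110 * k - 100 * (a + b)) 0 with hzero | hne
  · rw [hzero, Int.cast_zero, mul_zero] at hπ
    have : 10 * a - b = 0 := mod_cast hπ
    omega
  · exact absurd hπ.symm ((irrational_pi.mul_intCast hne).ne_int _)

lemma rotationNumber_bounds : 1 / 4 ≤ 5 / 11 - 1 / (220 * π) ∧
    5 / 11 - 1 / (220 * π) < 5 / 11 + 1 / (22 * π) ∧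
    0 < 1 / 4 + (5 / 11 - 1 / (220 * π)) / 2 - (5 / 11 + 1 / (22 * π)) := by
  have hpos : 0 < π⁻¹ := inv_pos.2 pi_pos
  have hlt : π⁻¹ < 3⁻¹ := inv_strictAnti₀ three_pos pi_gt_three
  simp only [one_div, mul_inv]
  exact ⟨by linarith, by linarith, by linarith⟩

theorem fIET_minimal_example_general {r1 r2 : ℝ} {m : ℤ} (hr2 : 1 / 4 ≤ r2)
    (hlt : r2 < r1) (hgap : 0 < 1 / 4 + r2 / 2 - r1) (hm : 10 ≤ m)
    (hrel : ∀ a b k : ℤ, a * r1 + b * r2 = k / 2 → b = m * a) :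
    (∀ x ∈ Ico (-1 : ℝ) 1, ∀ y ∈ Ico (-1 : ℝ) 1, ∀ ε : ℝ, 0 < ε →
      ∃ n : ℕ, |(fIET r1 r2)^[n] x - y| < ε) ∧
    (∀ x ∈ Ico (-1 : ℝ) 1, ∀ n : ℕ, 1 ≤ n → (fIET r1 r2)^[n] x ≠ x) := by
  have hne {n : ℕ} (hn : 0 < n) (x : ℝ) : (fIET r1 r2)^[n] x ≠ x :=
    fIET_iterate_ne_self hr2 hlt hgap (by omega) hrel hn x
  refine ⟨fun x hx y hy ε hε => ?_, fun x _ n hn => hne hn x⟩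
  have hcross : fIET r1 r2 (-1) = r1 + 1 / 2 := by
    rw [fIET, if_pos (by linarith)]
    ring
  obtain ⟨n, hyn, hny⟩ := (isIntervalExchange_fIET (by linarith) hlt hgap).exists_iterate_mem_Ico
    (fun x _ n hn => hne hn x) (connectionPoints_fIET_subset hr2 hlt hgap hm hrel)
    (x₀ := -1) (by norm_num) (by rw [hcross]; constructor <;> linarith)
    hy.1 (lt_min hy.2 (lt_add_of_pos_right y hε)) (min_le_left 1 (y + ε)) hx
  refine ⟨n, ?_⟩
  rw [abs_of_nonneg (sub_nonneg.2 hyn)]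
  linarith [hny.trans_le (min_le_right 1 (y + ε))]

theorem fIET_minimal_example :
    let r1 : ℝ := 5 / 11 + 1 / (22 * Real.pi)
    let r2 : ℝ := 5 / 11 - 1 / (220 * Real.pi)
    (∀ x ∈ Set.Ico (-1 : ℝ) 1, ∀ y ∈ Set.Ico (-1 : ℝ) 1, ∀ ε : ℝ, 0 < ε →
      ∃ n : ℕ, |(fIET r1 r2)^[n] x - y| < ε) ∧
    (∀ x ∈ Set.Ico (-1 : ℝ) 1, ∀ m : ℕ, 1 ≤ m → (fIET r1 r2)^[m] x ≠ x) := by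
  obtain ⟨hr2, hlt, hgap⟩ := rotationNumber_bounds
  exact fIET_minimal_example_general hr2 hlt hgap le_rfl fun _ _ _ => eq_ten_mul_of_relation
end
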